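/- Let ((v_k(t))_{k≥1,t∈[0,T]}, r) be a solution of the integrated Burgers control problem such that Σ_{k≥1} v_k(t) = 1 for every t ∈ [0,T] and Σ_{k≥1} k² v_k(0) < ∞, and suppose T ≥ T_gel := (Σ_k k v_k(0))^{−1}. Then for every t̄ ∈ [T_gel, T] and x̄ > 0 there exists a constant C > 0 such that −∂_x V(t,x) ≥ C·x^{−1/2} for all (t,x) ∈ [T_gel, t̄] × (0, x̄]. In particular, lim_{x→0⁺} ∂_x V(t,x) = −∞ for every t ∈ [T_gel, T]. -/

import Mathlib

open MeasureTheory Filter Topology Set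

/-- The generating function of the time-dependent cluster size distribution
`(v_k(t))_{k ≥ 1}`: `V(t,x) = ∑_{k≥1} v_k(t) e^(−kx) − 1`. -/
noncomputable def genFun (v : ℕ → ℝ → ℝ) (t x : ℝ) : ℝ :=
  (∑' k : ℕ, v (k + 1) t * Real.exp (-((k : ℝ) + 1) * x)) - 1

/-- `(v, r)` is a solution of the integrated Burgers control problem on `[0, T]`:
the `v_k(t)` are nonnegative with total mass at most one, `r` is nondecreasing on
`[0, T]` with `r 0 = 0`, `r T ≤ 1 + T/2`, and the generating function satisfies
`V(t,x) − V(0,x) + ∫₀ᵗ V(s,x)·∂ₓV(s,x) ds = e^(−x)·r(t)` for `t ∈ [0,T]`, `x > 0`. -/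
def IsBurgersSolution (T : ℝ) (v : ℕ → ℝ → ℝ) (r : ℝ → ℝ) : Prop :=
  (∀ k, 1 ≤ k → ∀ t ∈ Set.Icc (0:ℝ) T, 0 ≤ v k t) ∧
  (∀ t ∈ Set.Icc (0:ℝ) T, Summable (fun k : ℕ => v (k + 1) t)) ∧
  (∀ t ∈ Set.Icc (0:ℝ) T, (∑' k : ℕ, v (k + 1) t) ≤ 1) ∧
  MonotoneOn r (Set.Icc 0 T) ∧
  r 0 = 0 ∧
  (∀ t ∈ Set.Icc (0:ℝ) T, 0 ≤ r t) ∧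
  r T ≤ 1 + T / 2 ∧
  (∀ t ∈ Set.Icc (0:ℝ) T, ∀ x : ℝ, 0 < x →
    genFun v t x - genFun v 0 x
        + ∫ s in (0:ℝ)..t, genFun v s x * deriv (genFun v s) x
      = Real.exp (-x) * r t)

/-- `E(t,x) = −(∂ₓV(t,x))³ / ∂ₓ²V(t,x)`. -/
noncomputable def EFun (v : ℕ → ℝ → ℝ) (t x : ℝ) : ℝ :=
  -(deriv (genFun v t) x) ^ 3 / iteratedDeriv 2 (genFun v t) x


set_option linter.unusedSectionVars false


/-- Weighted generating function `∑ (k+1)^n w_k e^{-(k+1)x}`. -/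
noncomputable def gw (w : ℕ → ℝ) (n : ℕ) (x : ℝ) : ℝ :=
  ∑' k : ℕ, ((k : ℝ) + 1) ^ n * w k * Real.exp (-((k : ℝ) + 1) * x)

lemma pow_exp_bound (n k : ℕ) {x : ℝ} (hx : 0 < x) :
    ((k : ℝ) + 1) ^ n * Real.exp (-((k : ℝ) + 1) * x) ≤ n.factorial / x ^ n := by
  have h1 : (((k : ℝ) + 1) * x) ^ n / n.factorial ≤ Real.exp (((k : ℝ) + 1) * x) :=
    Real.pow_div_factorial_le_exp _ (by positivity) n
  have hf : (0 : ℝ) < n.factorial := by exact_mod_cast n.factorial_pos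
  rw [neg_mul, Real.exp_neg, ← div_eq_mul_inv, div_le_div_iff₀ (Real.exp_pos _) (by positivity)]
  rw [div_le_iff₀ hf] at h1
  rw [← mul_pow]
  linarith

section

lemma gw_term_le {w : ℕ → ℝ} (hw : ∀ k, 0 ≤ w k) (hs : HasSum w 1) (n k : ℕ) {x : ℝ} (hx : 0 < x) :
    ((k : ℝ) + 1) ^ n * w k * Real.exp (-((k : ℝ) + 1) * x) ≤ n.factorial / x ^ n * w k := by
  have := mul_le_mul_of_nonneg_right (pow_exp_bound n k hx) (hw k)
  linarith

lemma gw_summable {w : ℕ → ℝ} (hw : ∀ k, 0 ≤ w k) (hs : HasSum w 1) (n : ℕ) {x : ℝ} (hx : 0 < x) :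
    Summable (fun k : ℕ => ((k : ℝ) + 1) ^ n * w k * Real.exp (-((k : ℝ) + 1) * x)) := by
  refine Summable.of_nonneg_of_le (fun k => ?_) (fun k => gw_term_le hw hs n k hx)
    (hs.summable.mul_left _)
  have := hw k
  positivity

lemma gw_nonneg {w : ℕ → ℝ} (hw : ∀ k, 0 ≤ w k) (hs : HasSum w 1) (n : ℕ) (x : ℝ) : 0 ≤ gw w n x := by
  refine tsum_nonneg fun k => ?_
  have := hw k
  positivity

lemma gw_le {w : ℕ → ℝ} (hw : ∀ k, 0 ≤ w k) (hs : HasSum w 1) (n : ℕ) {x : ℝ} (hx : 0 < x) : gw w n x ≤ n.factorial / x ^ n := by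
  have := (gw_summable hw hs n hx).tsum_le_tsum (fun k => gw_term_le hw hs n k hx)
    (hs.summable.mul_left _)
  rw [tsum_mul_left, hs.tsum_eq, mul_one] at this
  exact this

lemma gw_hasDerivAt {w : ℕ → ℝ} (hw : ∀ k, 0 ≤ w k) (hs : HasSum w 1) (n : ℕ) {x : ℝ} (hx : 0 < x) :
    HasDerivAt (gw w n) (-(gw w (n + 1) x)) x := by
  have h := hasDerivAt_tsum_of_isPreconnected (𝕜 := ℝ)
    (u := fun k => (n+1).factorial / (x/2) ^ (n+1) * w k) (t := Set.Ioi (x/2))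
    (g := fun (k : ℕ) y => ((k : ℝ) + 1) ^ n * w k * Real.exp (-((k : ℝ) + 1) * y))
    (g' := fun (k : ℕ) y => -(((k : ℝ) + 1) ^ (n+1) * w k * Real.exp (-((k : ℝ) + 1) * y)))
    (y₀ := x) (y := x)
    (hs.summable.mul_left _) isOpen_Ioi isPreconnected_Ioi ?_ ?_ (by simpa using by linarith)
    (gw_summable hw hs n hx) (by simpa using by linarith)
  · rw [tsum_neg] at h
    exact h
  · intro k y hy
    have := (((hasDerivAt_id y).const_mul (-((k : ℝ) + 1))).exp).const_mul
      (((k : ℝ) + 1) ^ n * w k)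
    refine this.congr_deriv ?_
    simp only [id]
    ring
  · intro k y hy
    have hy' : x / 2 < y := hy
    have hk := hw k
    rw [norm_neg, Real.norm_of_nonneg (by positivity)]
    refine le_trans ?_ (gw_term_le hw hs (n+1) k (half_pos hx))
    gcongr ?_ * Real.exp ?_
    have : (0:ℝ) ≤ (k:ℝ) + 1 := by positivity
    nlinarith

lemma gw_zero_le_one {w : ℕ → ℝ} (hw : ∀ k, 0 ≤ w k) (hs : HasSum w 1) {x : ℝ} (hx : 0 < x) : gw w 0 x ≤ 1 := by
  simpa using gw_le hw hs 0 hx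

lemma gw_one_pos {w : ℕ → ℝ} (hw : ∀ k, 0 ≤ w k) (hs : HasSum w 1) {x : ℝ} (hx : 0 < x) : 0 < gw w 1 x := by
  have : ∃ k, 0 < w k := by
    by_contra! hcon
    have h0 : w = fun _ => 0 := funext fun k => le_antisymm (hcon k) (hw k)
    rw [h0] at hs
    exact one_ne_zero (hs.unique hasSum_zero)
  obtain ⟨k, hk⟩ := this
  refine (gw_summable hw hs 1 hx).tsum_pos (fun j => ?_) k (by positivity)
  have := hw j
  positivity

lemma gw_zero_continuousOn {w : ℕ → ℝ} (hw : ∀ k, 0 ≤ w k) (hs : HasSum w 1) : ContinuousOn (gw w 0) (Set.Ici 0) := by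
  refine continuousOn_tsum (u := w) (fun k => by fun_prop) hs.summable ?_
  intro k x hx
  have hx' : 0 ≤ x := hx
  have hk := hw k
  rw [Real.norm_of_nonneg (by positivity)]
  have : Real.exp (-((k : ℝ) + 1) * x) ≤ 1 := by
    rw [Real.exp_le_one_iff]
    have : (0:ℝ) ≤ (k:ℝ) + 1 := by positivity
    nlinarith
  nlinarith

lemma gw_zero_zero {w : ℕ → ℝ} (hw : ∀ k, 0 ≤ w k) (hs : HasSum w 1) : gw w 0 0 = 1 := by
  simp [gw, hs.tsum_eq]

lemma gw_zero_tendsto {w : ℕ → ℝ} (hw : ∀ k, 0 ≤ w k) (hs : HasSum w 1) : Tendsto (gw w 0) (𝓝[>] 0) (𝓝 1) := by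
  have := (gw_zero_continuousOn hw hs) 0 (by simp)
  rw [ContinuousWithinAt, gw_zero_zero hw hs] at this
  exact this.mono_left (nhdsWithin_mono _ Set.Ioi_subset_Ici_self)

lemma gw_one_lower {w : ℕ → ℝ} (hw : ∀ k, 0 ≤ w k) (hs : HasSum w 1) (hm : Summable fun k : ℕ => ((k:ℝ)+1)^2 * w k) {x : ℝ} (hx : 0 < x) :
    (∑' k : ℕ, ((k:ℝ)+1) * w k) - x * (∑' k : ℕ, ((k:ℝ)+1)^2 * w k) ≤ gw w 1 x := by
  have h1 : Summable fun k : ℕ => ((k:ℝ)+1) * w k := by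
    refine Summable.of_nonneg_of_le (fun k => ?_) (fun k => ?_) hm
    · have := hw k
      positivity
    · have := hw k
      have : (1:ℝ) ≤ (k:ℝ) + 1 := by simp
      gcongr
      nlinarith
  rw [← tsum_mul_left, ← h1.tsum_sub (hm.mul_left x)]
  refine (h1.sub (hm.mul_left x)).tsum_le_tsum (fun k => ?_) (gw_summable hw hs 1 hx)
  have h2 := Real.add_one_le_exp (-((k : ℝ) + 1) * x)
  have h3 : 0 ≤ ((k:ℝ)+1) * w k := by
    have := hw k
    positivity
  have := mul_le_mul_of_nonneg_left h2 h3
  rw [pow_one]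
  nlinarith

lemma gw_two_le {w : ℕ → ℝ} (hw : ∀ k, 0 ≤ w k) (hs : HasSum w 1) (hm : Summable fun k : ℕ => ((k:ℝ)+1)^2 * w k) {x : ℝ} (hx : 0 < x) :
    gw w 2 x ≤ (∑' k : ℕ, ((k:ℝ)+1)^2 * w k) := by
  refine (gw_summable hw hs 2 hx).tsum_le_tsum (fun k => ?_) hm
  have h3 : 0 ≤ ((k:ℝ)+1)^2 * w k := by
    have := hw k
    positivity
  have : Real.exp (-((k : ℝ) + 1) * x) ≤ 1 := by
    rw [Real.exp_le_one_iff]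
    have : (0:ℝ) ≤ (k:ℝ) + 1 := by positivity
    nlinarith
  nlinarith

end

lemma gw_analytic {w : ℕ → ℝ} (hw : ∀ k, 0 ≤ w k) (hs : HasSum w 1) :
    AnalyticOnNhd ℝ (gw w 0) (Set.Ioi 0) := by
  set p := FormalMultilinearSeries.ofScalars ℝ w with hp
  have hrad : (1 : ENNReal) ≤ p.radius := by
    have := p.le_radius_of_summable (r := 1) (by
      simp only [hp, FormalMultilinearSeries.ofScalars_norm, NNReal.coe_one, one_pow, mul_one]
      simpa [abs_of_nonneg (hw _)] using hs.summable)
    simpa using this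
  have hball := p.hasFPowerSeriesOnBall (lt_of_lt_of_le one_pos hrad)
  have hsum : ∀ z, p.sum z = ∑' k, w k * z ^ k := by
    intro z
    have := FormalMultilinearSeries.ofScalars_sum_eq w z
    simpa [FormalMultilinearSeries.ofScalarsSum, hp] using this
  have hcomp : gw w 0 = fun x => Real.exp (-x) * p.sum (Real.exp (-x)) := by
    funext x
    rw [hsum, ← tsum_mul_left]
    refine tsum_congr fun k => ?_
    rw [pow_zero, one_mul, ← Real.exp_nat_mul, mul_left_comm, ← Real.exp_add]
    congr 2
    ring
  rw [hcomp]
  intro x hx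
  have hx' : 0 < x := hx
  have hexp : AnalyticAt ℝ (fun x : ℝ => Real.exp (-x)) x := by fun_prop
  refine hexp.mul ?_
  refine AnalyticAt.fun_comp (g := p.sum) ?_ hexp
  refine hball.analyticOnNhd _ ?_
  refine Metric.eball_subset_eball hrad ?_
  rw [Metric.mem_eball, edist_zero_right, ← ofReal_norm, Real.norm_of_nonneg (Real.exp_pos _).le,
    ENNReal.ofReal_lt_one, Real.exp_lt_one_iff]
  linarith

lemma gw_eq_of_local {w w' : ℕ → ℝ} (hw : ∀ k, 0 ≤ w k) (hs : HasSum w 1)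
    (hw' : ∀ k, 0 ≤ w' k) (hs' : HasSum w' 1) {c y : ℝ} (hy : 0 < y)
    (h : ∀ᶠ x in 𝓝 y, gw w 0 x - gw w' 0 x = Real.exp (-x) * c) :
    ∀ x, 0 < x → gw w 0 x = gw w' 0 x := by
  have hE : Set.EqOn (fun x => gw w 0 x - gw w' 0 x) (fun x => Real.exp (-x) * c) (Set.Ioi 0) := by
    refine AnalyticOnNhd.eqOn_of_preconnected_of_eventuallyEq
      ((gw_analytic hw hs).sub (gw_analytic hw' hs')) ?_ isPreconnected_Ioi (z₀ := y) hy h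
    intro x _
    fun_prop
  have h1 : Tendsto (fun x => gw w 0 x - gw w' 0 x) (𝓝[>] 0) (𝓝 (1 - 1)) :=
    (gw_zero_tendsto hw hs).sub (gw_zero_tendsto hw' hs')
  have h2 : Tendsto (fun x => Real.exp (-x) * c) (𝓝[>] 0) (𝓝 (Real.exp (-0) * c)) := by
    refine Tendsto.mono_left ?_ nhdsWithin_le_nhds
    exact Continuous.tendsto (by fun_prop) 0
  have h3 : Tendsto (fun x => Real.exp (-x) * c) (𝓝[>] 0) (𝓝 (1 - 1)) := by
    refine h1.congr' ?_
    filter_upwards [self_mem_nhdsWithin] with x hx using hE hx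
  have hc : c = 0 := by simpa using tendsto_nhds_unique h2 h3
  intro x hx
  have := hE hx
  simp only [hc, mul_zero] at this
  linarith

/-- The generating functions along the solution. -/
noncomputable def gD (v : ℕ → ℝ → ℝ) (n : ℕ) (t x : ℝ) : ℝ := gw (fun k => v (k + 1) t) n x

lemma genFun_eq (v : ℕ → ℝ → ℝ) (t : ℝ) : genFun v t = fun x => gD v 0 t x - 1 := by
  funext x
  simp [genFun, gD, gw]

/-- The family of right hand sides. -/
noncomputable def gF (D : ℕ → ℝ → ℝ → ℝ) : ℕ → ℝ → ℝ → ℝ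
  | 0, t, x => (D 0 t x - 1) * D 1 t x
  | 1, t, x => D 1 t x ^ 2 + (D 0 t x - 1) * D 2 t x
  | 2, t, x => 3 * (D 1 t x * D 2 t x) + (D 0 t x - 1) * D 3 t x
  | _, t, x => 3 * D 2 t x ^ 2 + 4 * (D 1 t x * D 3 t x) + (D 0 t x - 1) * D 4 t x

/-- Regular families. -/
structure RegFam (T : ℝ) (D : ℕ → ℝ → ℝ → ℝ) : Prop where
  nonneg : ∀ n, ∀ t ∈ Set.Icc 0 T, ∀ x, 0 < x → 0 ≤ D n t x
  le : ∀ n, ∀ t ∈ Set.Icc 0 T, ∀ x, 0 < x → D n t x ≤ n.factorial / x ^ n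
  der : ∀ n, ∀ t ∈ Set.Icc 0 T, ∀ x, 0 < x → HasDerivAt (D n t) (-(D (n+1) t x)) x

lemma RegFam.le_one {T : ℝ} {D : ℕ → ℝ → ℝ → ℝ} (h : RegFam T D) {t x : ℝ}
    (ht : t ∈ Set.Icc 0 T) (hx : 0 < x) : D 0 t x ≤ 1 := by
  simpa using h.le 0 t ht x hx

lemma RegFam.contAt {T : ℝ} {D : ℕ → ℝ → ℝ → ℝ} (h : RegFam T D) (n : ℕ) {t x : ℝ}
    (ht : t ∈ Set.Icc 0 T) (hx : 0 < x) : ContinuousAt (D n t) x :=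
  (h.der n t ht x hx).continuousAt

lemma RegFam.le_of_le {T : ℝ} {D : ℕ → ℝ → ℝ → ℝ} (h : RegFam T D) {a : ℝ} (ha : 0 < a) (n : ℕ)
    {t x : ℝ} (ht : t ∈ Set.Icc 0 T) (hx : a ≤ x) : D n t x ≤ n.factorial / a ^ n := by
  refine (h.le n t ht x (ha.trans_le hx)).trans ?_
  gcongr

lemma RegFam.gF_contAt {T : ℝ} {D : ℕ → ℝ → ℝ → ℝ} (h : RegFam T D) (n : ℕ) {t x : ℝ}
    (ht : t ∈ Set.Icc 0 T) (hx : 0 < x) : ContinuousAt (gF D n t) x := by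
  have h0 := h.contAt 0 ht hx
  have h1 := h.contAt 1 ht hx
  have h2 := h.contAt 2 ht hx
  have h3 := h.contAt 3 ht hx
  have h4 := h.contAt 4 ht hx
  match n with
  | 0 => exact (h0.sub continuousAt_const).mul h1
  | 1 => exact (h1.pow 2).add ((h0.sub continuousAt_const).mul h2)
  | 2 => exact ((h1.mul h2).const_mul 3).add ((h0.sub continuousAt_const).mul h3)
  | (n+3) =>
    exact (((h2.pow 2).const_mul 3).add ((h1.mul h3).const_mul 4)).add
      ((h0.sub continuousAt_const).mul h4)

lemma RegFam.gF_der {T : ℝ} {D : ℕ → ℝ → ℝ → ℝ} (h : RegFam T D) (n : ℕ) (hn : n < 3) {t x : ℝ}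
    (ht : t ∈ Set.Icc 0 T) (hx : 0 < x) : HasDerivAt (gF D n t) (-(gF D (n+1) t x)) x := by
  have h0 := h.der 0 t ht x hx
  have h1 := h.der 1 t ht x hx
  have h2 := h.der 2 t ht x hx
  have h3 := h.der 3 t ht x hx
  match n with
  | 0 =>
    refine ((h0.sub_const 1).mul h1).congr_deriv ?_
    simp only [gF]; ring
  | 1 =>
    refine ((h1.pow 2).add ((h0.sub_const 1).mul h2)).congr_deriv ?_
    simp only [gF]; ring
  | 2 =>
    refine (((h1.mul h2).const_mul 3).add ((h0.sub_const 1).mul h3)).congr_deriv ?_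
    change _ = -(3 * D 2 t x ^ 2 + 4 * (D 1 t x * D 3 t x) + (D 0 t x - 1) * D 4 t x)
    ring
  | (n+3) => omega

/-- a crude bound -/
lemma RegFam.gF_bd {T : ℝ} {D : ℕ → ℝ → ℝ → ℝ} (h : RegFam T D) {K : ℝ} (hK : 1 ≤ K) (n : ℕ)
    {t x : ℝ} (ht : t ∈ Set.Icc 0 T) (hx : 0 < x) (hb : ∀ m ≤ 4, D m t x ≤ K) :
    |gF D n t x| ≤ 8 * K ^ 2 := by
  have p : ∀ m ≤ 4, 0 ≤ D m t x ∧ D m t x ≤ K := fun m hm => ⟨h.nonneg m t ht x hx, hb m hm⟩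
  have h0 := h.le_one ht hx
  obtain ⟨a0, b0⟩ := p 0 (by norm_num)
  obtain ⟨a1, b1⟩ := p 1 (by norm_num)
  obtain ⟨a2, b2⟩ := p 2 (by norm_num)
  obtain ⟨a3, b3⟩ := p 3 (by norm_num)
  obtain ⟨a4, b4⟩ := p 4 (by norm_num)
  have q : ∀ z, 0 ≤ z → z ≤ K → 0 ≤ (1 - D 0 t x) * z ∧ (1 - D 0 t x) * z ≤ K ^ 2 := by
    intro z h1 h2
    have : 0 ≤ 1 - D 0 t x := by linarith
    constructor
    · positivity
    · nlinarith
  have m : ∀ y z, 0 ≤ y → y ≤ K → 0 ≤ z → z ≤ K → 0 ≤ y * z ∧ y * z ≤ K ^ 2 := by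
    intro y z h1 h2 h3 h4
    constructor
    · positivity
    · nlinarith
  rw [abs_le]
  match n with
  | 0 => have := q _ a1 b1; constructor <;> simp only [gF] <;> nlinarith
  | 1 =>
    have := q _ a2 b2
    have := m _ _ a1 b1 a1 b1
    constructor <;> simp only [gF] <;> nlinarith
  | 2 =>
    have := q _ a3 b3
    have := m _ _ a1 b1 a2 b2
    constructor <;> simp only [gF] <;> nlinarith
  | (n+3) =>
    have := q _ a4 b4
    have := m _ _ a1 b1 a3 b3
    have := m _ _ a2 b2 a2 b2
    constructor <;> simp only [gF] <;> nlinarith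

lemma RegFam.exists_bd {T : ℝ} {D : ℕ → ℝ → ℝ → ℝ} (h : RegFam T D) {a : ℝ} (ha : 0 < a) :
    ∃ K, 1 ≤ K ∧ ∀ t ∈ Set.Icc 0 T, ∀ x, a ≤ x → ∀ m ≤ 4, D m t x ≤ K := by
  refine ⟨1 + ∑ m ∈ Finset.range 5, (m.factorial : ℝ) / a ^ m, ?_, ?_⟩
  · have : 0 ≤ ∑ m ∈ Finset.range 5, (m.factorial : ℝ) / a ^ m := by positivity
    linarith
  · intro t ht x hx m hm
    have h1 := h.le_of_le ha m ht hx
    have h2 := Finset.single_le_sum (f := fun m : ℕ => (m.factorial : ℝ) / a ^ m)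
      (s := Finset.range 5) (fun i _ => by positivity) (Finset.mem_range.2 (by omega : m < 5))
    linarith

lemma meas_all {T : ℝ} (hT : 0 < T) {D : ℕ → ℝ → ℝ → ℝ} {r : ℝ → ℝ} (h : RegFam T D)
    (heq : ∀ t ∈ Set.Icc 0 T, ∀ x, 0 < x →
      D 0 t x - D 0 0 x - ∫ s in (0:ℝ)..t, gF D 0 s x = Real.exp (-x) * r t)
    (hid : ∀ t ∈ Set.Icc 0 T, ∀ y, 0 < y →
      (∀ᶠ x in 𝓝 y, D 0 t x - D 0 0 x = Real.exp (-x) * r t) →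
      ∀ x, 0 < x → D 0 t x = D 0 0 x) :
    ∀ x, 0 < x → AEStronglyMeasurable (fun s => gF D 0 s x) (volume.restrict (Set.Ioc 0 T)) := by
  have h0T : (0:ℝ) ∈ Set.Icc 0 T := ⟨le_rfl, hT.le⟩
  set P : ℝ → Prop := fun t => ∀ x, 0 < x →
    AEStronglyMeasurable (fun s => gF D 0 s x) (volume.restrict (Set.Ioc 0 t)) with hP
  have claim1 : ∀ t ∈ Set.Icc 0 T, ¬ P t → ∀ x, 0 < x → D 0 t x = D 0 0 x := by
    intro t ht hnP
    simp only [hP] at hnP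
    push Not at hnP
    obtain ⟨y, hy, hny⟩ := hnP
    refine hid t ht y hy ?_
    by_contra hcon
    have hf : ∃ᶠ x in 𝓝 y, (0 < x ∧
        AEStronglyMeasurable (fun s => gF D 0 s x) (volume.restrict (Set.Ioc 0 t))) := by
      have hcon' : ∃ᶠ x in 𝓝 y, ¬ (D 0 t x - D 0 0 x = Real.exp (-x) * r t) :=
        Filter.not_eventually.1 hcon
      refine (hcon'.and_eventually (lt_mem_nhds hy)).mono ?_
      rintro x ⟨hx1, hx0⟩
      refine ⟨hx0, ?_⟩
      by_contra hnm
      apply hx1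
      have := heq t ht x hx0
      rw [intervalIntegral.integral_undef] at this
      · linarith
      · intro hi
        exact hnm ((intervalIntegrable_iff_integrableOn_Ioc_of_le ht.1).1 hi).aestronglyMeasurable
    obtain ⟨ns, hns, hp⟩ := Filter.exists_seq_forall_of_frequently hf
    apply hny
    refine aestronglyMeasurable_of_tendsto_ae atTop (f := fun n s => gF D 0 s (ns n))
      (fun n => (hp n).2) ?_
    filter_upwards [ae_restrict_mem measurableSet_Ioc] with s hs
    have hs' : s ∈ Set.Icc 0 T := ⟨hs.1.le, hs.2.trans ht.2⟩
    exact (h.gF_contAt 0 hs' hy).tendsto.comp hns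
  have anti : ∀ t t', t ≤ t' → P t' → P t := fun t t' htt hp x hx =>
    (hp x hx).mono_measure (Measure.restrict_mono (Set.Ioc_subset_Ioc_right htt) le_rfl)
  have hP0 : P 0 := by
    intro x hx
    simp
  set A : Set ℝ := {t | t ∈ Set.Icc 0 T ∧ P t} with hA
  have hA0 : (0:ℝ) ∈ A := ⟨h0T, hP0⟩
  have hAb : BddAbove A := ⟨T, fun t ht => ht.1.2⟩
  set t0 := sSup A with ht0
  have ht00 : 0 ≤ t0 := le_csSup hAb hA0
  have hlt : ∀ t, t < t0 → P t := by
    intro t ht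
    obtain ⟨t', ht', htt⟩ := exists_lt_of_lt_csSup ⟨0, hA0⟩ ht
    exact anti t t' htt.le ht'.2
  have hgt : ∀ t, t0 < t → t ≤ T → ∀ x, 0 < x → gF D 0 t x = gF D 0 0 x := by
    intro t ht htT x hx
    have htI : t ∈ Set.Icc 0 T := ⟨ht00.trans ht.le, htT⟩
    have hnP : ¬ P t := fun hp => absurd (le_csSup hAb (show t ∈ A from ⟨htI, hp⟩)) (not_le.2 ht)
    have hc := claim1 t htI hnP
    have hd : -(D 1 t x) = -(D 1 0 x) := by
      refine (h.der 0 t htI x hx).unique ((h.der 0 0 h0T x hx).congr_of_eventuallyEq ?_)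
      filter_upwards [lt_mem_nhds hx] with y hy using hc y hy
    simp only [gF, hc x hx, neg_inj.1 hd]
  intro x hx
  have hsub : Set.Ioc 0 T ⊆ ((⋃ n : ℕ, Set.Ioc 0 (t0 - 1 / ((n:ℝ) + 1))) ∪ {t0}) ∪ Set.Ioc t0 T := by
    intro s hs
    rcases lt_trichotomy s t0 with hst | hst | hst
    · left; left
      obtain ⟨n, hn⟩ := exists_nat_one_div_lt (sub_pos.2 hst)
      refine Set.mem_iUnion.2 ⟨n, hs.1, ?_⟩
      linarith
    · left; right
      exact hst
    · right
      exact ⟨hst, hs.2⟩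
  refine AEStronglyMeasurable.mono_measure ?_ (Measure.restrict_mono hsub le_rfl)
  rw [aestronglyMeasurable_union_iff, aestronglyMeasurable_union_iff,
    aestronglyMeasurable_iUnion_iff]
  refine ⟨⟨fun n => hlt _ ?_ x hx, ?_⟩, ?_⟩
  · have : (0:ℝ) < 1 / ((n:ℝ) + 1) := by positivity
    linarith
  · rw [Measure.restrict_eq_zero.2 (by simp)]
    exact aestronglyMeasurable_zero_measure _
  · refine (aestronglyMeasurable_const (b := gF D 0 0 x)).congr ?_
    filter_upwards [ae_restrict_mem measurableSet_Ioc] with s hs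
    exact (hgt s hs.1 hs.2 x hx).symm

/-- Evolution equations for the derivatives. -/
lemma evolution {T : ℝ} (hT : 0 < T) {D : ℕ → ℝ → ℝ → ℝ} {r : ℝ → ℝ} (h : RegFam T D)
    (hr : MonotoneOn r (Set.Icc 0 T))
    (heq : ∀ t ∈ Set.Icc 0 T, ∀ x, 0 < x →
      D 0 t x - D 0 0 x - ∫ s in (0:ℝ)..t, gF D 0 s x = Real.exp (-x) * r t)
    (hm : ∀ x, 0 < x →
      AEStronglyMeasurable (fun s => gF D 0 s x) (volume.restrict (Set.Ioc 0 T))) :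
    ∀ n ≤ 3, (∀ x, 0 < x → IntervalIntegrable (fun s => gF D n s x) volume 0 T) ∧
      ∀ t ∈ Set.Icc 0 T, ∀ x, 0 < x →
      D n t x - D n 0 x - ∫ s in (0:ℝ)..t, gF D n s x = Real.exp (-x) * r t := by
  have hbdint : ∀ n, ∀ x, 0 < x →
      AEStronglyMeasurable (fun s => gF D n s x) (volume.restrict (Set.Ioc 0 T)) →
      IntervalIntegrable (fun s => gF D n s x) volume 0 T := by
    intro n x hx hmeas
    obtain ⟨K, hK1, hK⟩ := h.exists_bd hx
    rw [intervalIntegrable_iff_integrableOn_Ioc_of_le hT.le]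
    refine Integrable.mono' (g := fun _ => 8 * K ^ 2) (integrable_const _) hmeas ?_
    filter_upwards [ae_restrict_mem measurableSet_Ioc] with s hs
    have hs' : s ∈ Set.Icc 0 T := ⟨hs.1.le, hs.2⟩
    exact h.gF_bd hK1 n hs' hx (fun m hm => hK s hs' x le_rfl m hm)
  have hD : ∀ n, ∀ x, 0 < x →
      AEStronglyMeasurable (fun s => D n s x) (volume.restrict (Set.Ioc 0 T)) := by
    intro n
    induction n with
    | zero =>
      intro x hx
      have hi := hbdint 0 x hx (hm x hx)
      have h1 : AEStronglyMeasurable (fun t => ∫ s in (0:ℝ)..t, gF D 0 s x)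
          (volume.restrict (Set.Ioc 0 T)) := by
        have hc : ContinuousOn (fun t => ∫ s in (0:ℝ)..t, gF D 0 s x) (Set.uIcc 0 T) :=
          intervalIntegral.continuousOn_primitive_interval' hi Set.left_mem_uIcc
        rw [Set.uIcc_of_le hT.le] at hc
        exact (hc.mono Set.Ioc_subset_Icc_self).aestronglyMeasurable measurableSet_Ioc
      have h2 : AEStronglyMeasurable r (volume.restrict (Set.Ioc 0 T)) :=
        (aemeasurable_restrict_of_monotoneOn measurableSet_Ioc
          (hr.mono Set.Ioc_subset_Icc_self)).aestronglyMeasurable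
      have h3 := ((h1.add (h2.const_mul (Real.exp (-x)))).add
        (aestronglyMeasurable_const (b := D 0 0 x)))
      refine h3.congr ?_
      filter_upwards [ae_restrict_mem measurableSet_Ioc] with s hs
      have hs' : s ∈ Set.Icc 0 T := ⟨hs.1.le, hs.2⟩
      have := heq s hs' x hx
      simp only [Pi.add_apply]
      linarith
    | succ n ih =>
      intro x hx
      refine aestronglyMeasurable_of_tendsto_ae atTop
        (f := fun (j : ℕ) s => -((1 / ((j:ℝ) + 1))⁻¹ * (D n s (x + 1 / ((j:ℝ) + 1)) - D n s x)))
        (fun j => ?_) ?_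
      · exact ((((ih (x + 1 / ((j:ℝ) + 1)) (by positivity)).sub (ih x hx)).const_mul _)).neg
      · filter_upwards [ae_restrict_mem measurableSet_Ioc] with s hs
        have hs' : s ∈ Set.Icc 0 T := ⟨hs.1.le, hs.2⟩
        have hd := hasDerivAt_iff_tendsto_slope_zero.1 (h.der n s hs' x hx)
        have hu : Tendsto (fun j : ℕ => 1 / ((j:ℝ) + 1)) atTop (𝓝[≠] 0) := by
          refine tendsto_nhdsWithin_iff.2 ⟨tendsto_one_div_add_atTop_nhds_zero_nat, ?_⟩
          refine Eventually.of_forall fun j => ?_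
          have : (0:ℝ) < 1 / ((j:ℝ) + 1) := by positivity
          exact this.ne'
        have := (hd.comp hu).neg
        rw [neg_neg] at this
        exact this
  have hF : ∀ n, ∀ x, 0 < x →
      AEStronglyMeasurable (fun s => gF D n s x) (volume.restrict (Set.Ioc 0 T)) := by
    intro n x hx
    have c : AEStronglyMeasurable (fun _ : ℝ => (1:ℝ)) (volume.restrict (Set.Ioc 0 T)) :=
      aestronglyMeasurable_const
    match n with
    | 0 => exact ((hD 0 x hx).sub c).mul (hD 1 x hx)
    | 1 => exact ((hD 1 x hx).pow 2).add (((hD 0 x hx).sub c).mul (hD 2 x hx))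
    | 2 =>
      exact (((hD 1 x hx).mul (hD 2 x hx)).const_mul 3).add
            (((hD 0 x hx).sub c).mul (hD 3 x hx))
    | (n+3) =>
      exact ((((hD 2 x hx).pow 2).const_mul 3).add
            (((hD 1 x hx).mul (hD 3 x hx)).const_mul 4)).add
            (((hD 0 x hx).sub c).mul (hD 4 x hx))
  intro n hn
  refine ⟨fun x hx => hbdint n x hx (hF n x hx), ?_⟩
  induction n with
  | zero => exact heq
  | succ n ih =>
    intro t ht x hx
    have ihn := ih (by omega) t ht
    have hsubI : Set.uIoc 0 t ⊆ Set.Ioc 0 T := by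
      rw [Set.uIoc_of_le ht.1]
      exact Set.Ioc_subset_Ioc_right ht.2
    obtain ⟨K, hK1, hK⟩ := h.exists_bd (half_pos hx)
    have hdint := (intervalIntegral.hasDerivAt_integral_of_dominated_loc_of_deriv_le
      (μ := volume) (a := 0) (b := t) (F := fun y s => gF D n s y)
      (F' := fun y s => -(gF D (n+1) s y)) (x₀ := x) (s := Set.Ioi (x/2))
      (bound := fun _ => 8 * K ^ 2)
      (Ioi_mem_nhds (half_lt_self hx)) ?_ ?_ ?_ ?_ ?_ ?_).2
    · have hL := (((h.der n t ht x hx).sub (h.der n 0 ⟨le_rfl, hT.le⟩ x hx)).sub hdint)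
      have hR : HasDerivAt (fun y => Real.exp (-y) * r t) (-(Real.exp (-x) * r t)) x := by
        refine (((hasDerivAt_id x).neg.exp).mul_const (r t)).congr_deriv ?_
        simp
      have hu := hL.unique (hR.congr_of_eventuallyEq (by
        filter_upwards [lt_mem_nhds hx] with y hy using ihn y hy))
      rw [intervalIntegral.integral_neg] at hu
      linarith
    · filter_upwards [lt_mem_nhds hx] with y hy
      exact (hF n y hy).mono_measure (Measure.restrict_mono hsubI le_rfl)
    · refine (hbdint n x hx (hF n x hx)).mono_set ?_
      rw [Set.uIcc_of_le ht.1, Set.uIcc_of_le hT.le]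
      exact Set.Icc_subset_Icc_right ht.2
    · exact ((hF (n+1) x hx).mono_measure (Measure.restrict_mono hsubI le_rfl)).neg
    · refine Eventually.of_forall fun s hs y hy => ?_
      have hs' := hsubI hs
      have hs'' : s ∈ Set.Icc 0 T := ⟨hs'.1.le, hs'.2⟩
      have hy' : x / 2 < y := hy
      rw [norm_neg]
      exact h.gF_bd hK1 _ hs'' (by linarith) (fun m hm => hK s hs'' y hy'.le m hm)
    · exact intervalIntegrable_const
    · refine Eventually.of_forall fun s hs y hy => ?_
      have hs' := hsubI hs
      have hs'' : s ∈ Set.Icc 0 T := ⟨hs'.1.le, hs'.2⟩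
      have hy' : x / 2 < y := hy
      exact h.gF_der n (by omega) hs'' (by linarith)

/-- Full package used in the analysis. -/
structure EvoFam (T : ℝ) (D : ℕ → ℝ → ℝ → ℝ) (r : ℝ → ℝ) : Prop extends RegFam T D where
  mono : MonotoneOn r (Set.Icc 0 T)
  evo : ∀ n ≤ 3, ∀ s t, 0 ≤ s → s ≤ t → t ≤ T → ∀ x, 0 < x →
    IntervalIntegrable (fun τ => gF D n τ x) volume s t ∧
    D n t x - D n s x = (∫ τ in s..t, gF D n τ x) + Real.exp (-x) * (r t - r s)

lemma evoFam_of {T : ℝ} (hT : 0 < T) {D : ℕ → ℝ → ℝ → ℝ} {r : ℝ → ℝ} (h : RegFam T D)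
    (hr : MonotoneOn r (Set.Icc 0 T))
    (heq : ∀ t ∈ Set.Icc 0 T, ∀ x, 0 < x →
      D 0 t x - D 0 0 x - ∫ s in (0:ℝ)..t, gF D 0 s x = Real.exp (-x) * r t)
    (hid : ∀ t ∈ Set.Icc 0 T, ∀ y, 0 < y →
      (∀ᶠ x in 𝓝 y, D 0 t x - D 0 0 x = Real.exp (-x) * r t) →
      ∀ x, 0 < x → D 0 t x = D 0 0 x) : EvoFam T D r := by
  refine { toRegFam := h, mono := hr, evo := ?_ }
  intro n hn s t hs hst ht x hx
  obtain ⟨h1, h2⟩ := evolution hT h hr heq (meas_all hT h heq hid) n hn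
  have hI : ∀ a b, 0 ≤ a → a ≤ b → b ≤ T →
      IntervalIntegrable (fun τ => gF D n τ x) volume a b := by
    intro a b ha hab hb
    refine (h1 x hx).mono_set ?_
    rw [Set.uIcc_of_le hab, Set.uIcc_of_le hT.le]
    exact Set.Icc_subset_Icc ha hb
  refine ⟨hI s t hs hst ht, ?_⟩
  have e1 := h2 t ⟨hs.trans hst, ht⟩ x hx
  have e2 := h2 s ⟨hs, hst.trans ht⟩ x hx
  have e3 := intervalIntegral.integral_add_adjacent_intervals
    (hI 0 s le_rfl hs (hst.trans ht)) (hI s t hs hst ht)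
  linarith

lemma sum_lemma {φ r : ℝ → ℝ} {s t C : ℝ} (hst : s ≤ t)
    (H : ∀ τ τ', s ≤ τ → τ ≤ τ' → τ' ≤ t →
      φ τ' - φ τ ≤ C * (τ' - τ) * ((τ' - τ) + (r τ' - r τ))) : φ t ≤ φ s := by
  have key : ∀ N : ℕ, φ t - φ s ≤ (C * (t - s) * ((t - s) + (r t - r s))) * (1 / ((N:ℝ) + 1)) := by
    intro N
    have hN : (0:ℝ) < (N:ℝ) + 1 := by positivity
    set d := (t - s) / ((N:ℝ) + 1) with hd
    have hd0 : 0 ≤ d := div_nonneg (by linarith) hN.le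
    have hdN : ((N:ℝ) + 1) * d = t - s := by rw [hd]; field_simp
    set p : ℕ → ℝ := fun i => s + i * d with hp
    have hp0 : p 0 = s := by simp [hp]
    have hpN : p (N+1) = t := by simp only [hp]; push_cast; linarith
    have h1 := Finset.sum_range_sub (fun i => φ (p i)) (N+1)
    have h2 := Finset.sum_range_sub (fun i => r (p i)) (N+1)
    have h3 := Finset.sum_range_sub p (N+1)
    simp only [hp0, hpN] at h1 h2 h3
    have h4 : ∀ i ∈ Finset.range (N+1), φ (p (i+1)) - φ (p i) ≤
        C * d * ((p (i+1) - p i) + (r (p (i+1)) - r (p i))) := by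
      intro i hi
      have hi' : ((i:ℝ) + 1) ≤ (N:ℝ) + 1 := by
        have : i < N + 1 := Finset.mem_range.1 hi
        exact_mod_cast this
      have e1 : p (i+1) - p i = d := by simp only [hp]; push_cast; ring
      have := H (p i) (p (i+1)) (by simp only [hp]; nlinarith [Nat.cast_nonneg (α := ℝ) i])
        (by linarith) (by simp only [hp]; push_cast; nlinarith)
      rw [e1] at this ⊢
      exact this
    have h5 := Finset.sum_le_sum h4
    rw [h1, ← Finset.mul_sum, Finset.sum_add_distrib, h2, h3] at h5
    refine h5.trans (le_of_eq ?_)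
    rw [hd]
    ring
  have hlim : Tendsto (fun N : ℕ => (C * (t - s) * ((t - s) + (r t - r s))) * (1 / ((N:ℝ) + 1)))
      atTop (𝓝 ((C * (t - s) * ((t - s) + (r t - r s))) * 0)) :=
    tendsto_one_div_add_atTop_nhds_zero_nat.const_mul _
  have := ge_of_tendsto' hlim key
  linarith

section
variable {T : ℝ} {D : ℕ → ℝ → ℝ → ℝ}

lemma RegFam.mvt (h : RegFam T D) (n : ℕ) {t x y : ℝ} (ht : t ∈ Set.Icc 0 T) (hx : 0 < x)
    (hxy : x < y) : ∃ c ∈ Set.Ioo x y, D n t y - D n t x = -(D (n+1) t c) * (y - x) := by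
  obtain ⟨c, hc, he⟩ := exists_hasDerivAt_eq_slope (D n t) (fun z => -(D (n+1) t z)) hxy
    (fun z hz => (h.contAt n ht (hx.trans_le hz.1)).continuousWithinAt)
    (fun z hz => h.der n t ht z (hx.trans hz.1))
  refine ⟨c, hc, ?_⟩
  rw [he, div_mul_cancel₀]
  linarith

lemma RegFam.anti (h : RegFam T D) (n : ℕ) {t x y : ℝ} (ht : t ∈ Set.Icc 0 T) (hx : 0 < x)
    (hxy : x ≤ y) : D n t y ≤ D n t x := by
  rcases hxy.eq_or_lt with rfl | hlt
  · exact le_rfl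
  obtain ⟨c, hc, he⟩ := h.mvt n ht hx hlt
  have := h.nonneg (n+1) t ht c (hx.trans hc.1)
  nlinarith

lemma RegFam.lip (h : RegFam T D) (n : ℕ) {t x y : ℝ} (ht : t ∈ Set.Icc 0 T) (hx : 0 < x)
    (hxy : x ≤ y) : D n t x - D (n+1) t x * (y - x) ≤ D n t y := by
  rcases hxy.eq_or_lt with rfl | hlt
  · simp
  obtain ⟨c, hc, he⟩ := h.mvt n ht hx hlt
  have := h.anti (n+1) ht hx hc.1.le
  nlinarith

lemma RegFam.taylor (h : RegFam T D) (n : ℕ) {t x y : ℝ} (ht : t ∈ Set.Icc 0 T) (hx : 0 < x)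
    (hxy : x ≤ y) :
    D n t y ≤ D n t x - D (n+1) t x * (y - x) + D (n+2) t x * (y - x) ^ 2 := by
  rcases hxy.eq_or_lt with rfl | hlt
  · simp
  obtain ⟨c, hc, he⟩ := h.mvt n ht hx hlt
  have h1 := h.lip (n+1) ht hx hc.1.le
  have h2 := h.nonneg (n+2) t ht x hx
  have h3 : D (n+2) t x * (c - x) ≤ D (n+2) t x * (y - x) :=
    mul_le_mul_of_nonneg_left (by linarith [hc.2]) h2
  nlinarith

end

section
variable {T : ℝ} {D : ℕ → ℝ → ℝ → ℝ} {r : ℝ → ℝ}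

lemma EvoFam.freeze (E : EvoFam T D r) {a K : ℝ} (ha : 0 < a) (hK1 : 1 ≤ K)
    (hK : ∀ t ∈ Set.Icc 0 T, ∀ x, a ≤ x → ∀ m ≤ 4, D m t x ≤ K)
    {s t x : ℝ} (hs : 0 ≤ s) (hst : s ≤ t) (htT : t ≤ T) (hx : a ≤ x) (n : ℕ)
    (hn : n = 1 ∨ n = 2) :
    |D n t x - (D n s x + (t - s) * gF D n s x + Real.exp (-x) * (r t - r s))| ≤
      64 * K ^ 3 * (t - s) * ((t - s) + (r t - r s)) := by
  have hx0 : 0 < x := ha.trans_le hx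
  have hsI : s ∈ Set.Icc 0 T := ⟨hs, hst.trans htT⟩
  have htI : t ∈ Set.Icc 0 T := ⟨hs.trans hst, htT⟩
  set δ := r t - r s with hδ
  set η := 8 * K ^ 2 * ((t - s) + δ) with hη
  have hδ0 : 0 ≤ δ := sub_nonneg.2 (E.mono hsI htI hst)
  have hη0 : 0 ≤ η := by
    have : 0 ≤ t - s := by linarith
    positivity
  have hdiff : ∀ m ≤ 3, ∀ τ, s ≤ τ → τ ≤ t → |D m τ x - D m s x| ≤ η := by
    intro m hm τ h1 h2
    have hτI : τ ∈ Set.Icc 0 T := ⟨hs.trans h1, h2.trans htT⟩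
    obtain ⟨_, he⟩ := E.evo m hm s τ hs h1 (h2.trans htT) x hx0
    have hb : ‖∫ τ in s..τ, gF D m τ x‖ ≤ (8 * K ^ 2) * |τ - s| := by
      refine intervalIntegral.norm_integral_le_of_norm_le_const fun z hz => ?_
      rw [Set.uIoc_of_le h1] at hz
      have hzI : z ∈ Set.Icc 0 T := ⟨hs.trans hz.1.le, hz.2.trans hτI.2⟩
      exact E.gF_bd hK1 m hzI hx0 (fun j hj => hK z hzI x hx j hj)
    rw [abs_of_nonneg (by linarith : 0 ≤ τ - s)] at hb
    have hr1 : 0 ≤ r τ - r s := sub_nonneg.2 (E.mono hsI hτI h1)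
    have hr2 : r τ ≤ r t := E.mono hτI htI h2
    have hex : Real.exp (-x) ≤ 1 := by rw [Real.exp_le_one_iff]; linarith
    have hex0 := Real.exp_pos (-x)
    have hK2 : 1 ≤ 8 * K ^ 2 := by nlinarith
    rw [he]
    refine (abs_add_le _ _).trans ?_
    rw [abs_of_nonneg (by positivity : 0 ≤ Real.exp (-x) * (r τ - r s))]
    have e1 : Real.exp (-x) * (r τ - r s) ≤ δ := by nlinarith
    have e2 : δ ≤ 8 * K ^ 2 * δ := by nlinarith
    have e3 : 8 * K ^ 2 * (τ - s) ≤ 8 * K ^ 2 * (t - s) := by gcongr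
    have hb' : |∫ τ in s..τ, gF D m τ x| ≤ 8 * K ^ 2 * (τ - s) := hb
    rw [hη]
    linarith
  have prod : ∀ p q p' q' : ℝ, |p' - p| ≤ η → |q' - q| ≤ η → |p| ≤ K → |q'| ≤ K →
      |p' * q' - p * q| ≤ 2 * K * η := by
    intro p q p' q' h1 h2 h3 h4
    have : p' * q' - p * q = (p' - p) * q' + p * (q' - q) := by ring
    rw [this]
    refine (abs_add_le _ _).trans ?_
    rw [abs_mul, abs_mul]
    have := mul_le_mul h1 h4 (abs_nonneg _) hη0
    have := mul_le_mul h3 h2 (abs_nonneg _) (by linarith)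
    linarith
  have hFd : ∀ τ, s ≤ τ → τ ≤ t → |gF D n τ x - gF D n s x| ≤ 8 * K * η := by
    intro τ h1 h2
    have hτI : τ ∈ Set.Icc 0 T := ⟨hs.trans h1, h2.trans htT⟩
    have bd : ∀ m ≤ 4, ∀ z ∈ Set.Icc 0 T, |D m z x| ≤ K := fun m hm z hz => by
      rw [abs_of_nonneg (E.nonneg m z hz x hx0)]
      exact hK z hz x hx m hm
    have bd0 : ∀ z ∈ Set.Icc 0 T, |D 0 z x - 1| ≤ K := fun z hz => by
      have := E.le_one hz hx0
      have := E.nonneg 0 z hz x hx0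
      rw [abs_le]
      constructor <;> linarith
    have d0 : |(D 0 τ x - 1) - (D 0 s x - 1)| ≤ η := by
      have := hdiff 0 (by norm_num) τ h1 h2
      rwa [sub_sub_sub_cancel_right]
    have d1 := hdiff 1 (by norm_num) τ h1 h2
    have d2 := hdiff 2 (by norm_num) τ h1 h2
    have d3 := hdiff 3 (by norm_num) τ h1 h2
    have hKη : 0 ≤ K * η := by positivity
    rcases hn with rfl | rfl
    · have p1 := prod _ _ _ _ d1 d1 (bd 1 (by norm_num) s hsI) (bd 1 (by norm_num) τ hτI)
      have p2 := prod _ _ _ _ d0 d2 (bd0 s hsI) (bd 2 (by norm_num) τ hτI)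
      rw [abs_le] at p1 p2 ⊢
      simp only [gF]
      constructor <;> nlinarith
    · have p1 := prod _ _ _ _ d1 d2 (bd 1 (by norm_num) s hsI) (bd 2 (by norm_num) τ hτI)
      have p2 := prod _ _ _ _ d0 d3 (bd0 s hsI) (bd 3 (by norm_num) τ hτI)
      rw [abs_le] at p1 p2 ⊢
      simp only [gF]
      constructor <;> nlinarith
  obtain ⟨hi, he⟩ := E.evo n (by omega) s t hs hst htT x hx0
  have hintegral : (∫ τ in s..t, gF D n τ x) - (t - s) * gF D n s x
      = ∫ τ in s..t, (gF D n τ x - gF D n s x) := by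
    rw [intervalIntegral.integral_sub hi intervalIntegrable_const,
      intervalIntegral.integral_const, smul_eq_mul]
  have hb : ‖∫ τ in s..t, (gF D n τ x - gF D n s x)‖ ≤ (8 * K * η) * |t - s| := by
    refine intervalIntegral.norm_integral_le_of_norm_le_const fun z hz => ?_
    rw [Set.uIoc_of_le hst] at hz
    exact hFd z hz.1.le hz.2
  rw [abs_of_nonneg (by linarith : 0 ≤ t - s), Real.norm_eq_abs, ← hintegral] at hb
  have e1 : D n t x - (D n s x + (t - s) * gF D n s x + Real.exp (-x) * δ)
      = (∫ τ in s..t, gF D n τ x) - (t - s) * gF D n s x := by linarith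
  rw [e1]
  refine hb.trans (le_of_eq ?_)
  rw [hη]
  ring

lemma EvoFam.step (E : EvoFam T D r) {a K : ℝ} (ha : 0 < a) (hK1 : 1 ≤ K)
    (hK : ∀ t ∈ Set.Icc 0 T, ∀ x, a ≤ x → ∀ m ≤ 4, D m t x ≤ K)
    {s t x y : ℝ} (hs : 0 ≤ s) (hst : s ≤ t) (htT : t ≤ T) (hx : a ≤ x)
    (hy : y = x + (t - s) * (1 - D 0 s x)) :
    D 1 s y + (t - s) * D 1 s y ^ 2 + Real.exp (-x) * (r t - r s)
        - 70 * K ^ 3 * (t - s) * ((t - s) + (r t - r s)) ≤ D 1 t x ∧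
    D 2 t x ≤ D 2 s y + 3 * (t - s) * (D 1 s y * D 2 s y) + Real.exp (-x) * (r t - r s)
        + 70 * K ^ 3 * (t - s) * ((t - s) + (r t - r s)) := by
  have hx0 : 0 < x := ha.trans_le hx
  have hsI : s ∈ Set.Icc 0 T := ⟨hs, hst.trans htT⟩
  have htI : t ∈ Set.Icc 0 T := ⟨hs.trans hst, htT⟩
  have f1 := E.freeze ha hK1 hK hs hst htT hx 1 (Or.inl rfl)
  have f2 := E.freeze ha hK1 hK hs hst htT hx 2 (Or.inr rfl)
  have hδ0 : 0 ≤ r t - r s := sub_nonneg.2 (E.mono hsI htI hst)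
  set δ := r t - r s with hδ
  set h := t - s with hh
  have hh0 : 0 ≤ h := by rw [hh]; linarith
  have hU0 : 0 ≤ 1 - D 0 s x := by linarith [E.le_one hsI hx0]
  have hU1 : 1 - D 0 s x ≤ 1 := by linarith [E.nonneg 0 s hsI x hx0]
  set U := 1 - D 0 s x with hU
  have hxy : x ≤ y := by rw [hy]; nlinarith
  have hyx : y - x = h * U := by rw [hy]; ring
  have hyx1 : y - x ≤ h := by rw [hyx]; nlinarith
  have nn : ∀ m, 0 ≤ D m s x := fun m => E.nonneg m s hsI x hx0
  have nny : ∀ m, 0 ≤ D m s y := fun m => E.nonneg m s hsI y (hx0.trans_le hxy)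
  have bx : ∀ m ≤ 4, D m s x ≤ K := hK s hsI x hx
  have by' : ∀ m ≤ 4, D m s y ≤ K := hK s hsI y (hx.trans hxy)
  have an : ∀ m, D m s y ≤ D m s x := fun m => E.anti m hsI hx0 hxy
  have hhδ : h ^ 2 ≤ h * (h + δ) := by nlinarith
  have hK3 : K ≤ K ^ 3 := by nlinarith [sq_nonneg K]
  have hK23 : K ^ 2 ≤ K ^ 3 := by nlinarith [sq_nonneg K]
  have hW : 0 ≤ h * (h + δ) := by positivity
  constructor
  · have t1 := E.taylor 1 hsI hx0 hxy
    simp only [gF] at f1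
    rw [abs_le] at f1
    have g1 : D (1+2) s x * (y - x) ^ 2 ≤ K * h ^ 2 := by
      have := bx 3 (by norm_num)
      have := nn 3
      have : 0 ≤ y - x := by linarith
      norm_num
      gcongr
    have g2 : h * D 1 s y ^ 2 ≤ h * D 1 s x ^ 2 := by
      have := nny 1
      gcongr
      exact an 1
    have g3 : K * h ^ 2 ≤ K ^ 3 * (h * (h + δ)) := by gcongr
    have g4 : D 0 s x - 1 = - U := by rw [hU]; ring
    rw [hyx] at t1
    norm_num at t1
    rw [g4] at f1
    have f1' := f1.1
    have g5 : 0 ≤ K ^ 3 * (h * (h + δ)) := by positivity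
    rw [hyx] at g1
    norm_num at g1
    linarith
  · have t2 := E.lip 2 hsI hx0 hxy
    simp only [gF] at f2
    rw [abs_le] at f2
    have l : ∀ m ≤ 3, D m s x ≤ D m s y + K * h := by
      intro m hm
      have q1 := E.lip m hsI hx0 hxy
      have q2 : D (m+1) s x * (y - x) ≤ K * h := by
        have := bx (m+1) (by omega)
        have := nn (m+1)
        gcongr
      linarith
    have l1 := l 1 (by norm_num)
    have l2 := l 2 (by norm_num)
    have g1 : D 1 s x * D 2 s x ≤ D 1 s y * D 2 s y + 2 * K ^ 2 * h := by
      have e1 : D 1 s x * D 2 s x ≤ D 1 s x * (D 2 s y + K * h) :=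
        mul_le_mul_of_nonneg_left l2 (nn 1)
      have e2 : D 1 s x * D 2 s y ≤ (D 1 s y + K * h) * D 2 s y :=
        mul_le_mul_of_nonneg_right l1 (nny 2)
      have e3 : D 1 s x * (K * h) ≤ K * (K * h) :=
        mul_le_mul_of_nonneg_right (bx 1 (by norm_num)) (by positivity)
      have e4 : K * h * D 2 s y ≤ K * h * K :=
        mul_le_mul_of_nonneg_left (by' 2 (by norm_num)) (by positivity)
      nlinarith
    have g2 : 3 * h * (D 1 s x * D 2 s x) ≤ 3 * h * (D 1 s y * D 2 s y + 2 * K ^ 2 * h) :=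
      mul_le_mul_of_nonneg_left g1 (by positivity)
    have g3 : K ^ 2 * h ^ 2 ≤ K ^ 3 * (h * (h + δ)) := by gcongr
    have g4 : D 0 s x - 1 = - U := by rw [hU]; ring
    rw [hyx] at t2
    norm_num at t2
    rw [g4] at f2
    have f2' := f2.2
    linarith

end

section
variable {T : ℝ} {D : ℕ → ℝ → ℝ → ℝ} {r : ℝ → ℝ}

lemma EvoFam.barrier (E : EvoFam T D r) {a s t : ℝ} (ha : 0 < a) (hs : 0 ≤ s) (hst : s ≤ t)
    (htT : t ≤ T) (Φ : ℝ → ℝ) (hΦa : ∀ τ, s ≤ τ → τ ≤ t → a ≤ Φ τ)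
    (hΦ : ∀ τ τ', s ≤ τ → τ ≤ τ' → τ' ≤ t →
      Φ τ' + (τ' - τ) * (1 - D 0 τ (Φ τ')) ≤ Φ τ) (hpos : 0 < D 1 s (Φ s)) :
    D 1 s (Φ s) ≤ D 1 t (Φ t) ∧ (D 1 t (Φ t))⁻¹ ≤ (D 1 s (Φ s))⁻¹ - (t - s) := by
  obtain ⟨K, hK1, hK⟩ := E.exists_bd ha
  set g : ℝ → ℝ := fun τ => D 1 τ (Φ τ) with hg
  have hI : ∀ τ, s ≤ τ → τ ≤ t → τ ∈ Set.Icc 0 T := fun τ h1 h2 => ⟨hs.trans h1, h2.trans htT⟩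
  have hgK : ∀ τ, s ≤ τ → τ ≤ t → g τ ≤ K := fun τ h1 h2 =>
    hK τ (hI τ h1 h2) _ (hΦa τ h1 h2) 1 (by norm_num)
  have hg0 : ∀ τ, s ≤ τ → τ ≤ t → 0 ≤ g τ := fun τ h1 h2 =>
    E.nonneg 1 τ (hI τ h1 h2) _ (ha.trans_le (hΦa τ h1 h2))
  have hstep : ∀ τ τ', s ≤ τ → τ ≤ τ' → τ' ≤ t →
      g τ + (τ' - τ) * g τ ^ 2 - 70 * K ^ 3 * (τ' - τ) * ((τ' - τ) + (r τ' - r τ)) ≤ g τ' := by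
    intro τ τ' h1 h2 h3
    have hτI := hI τ h1 (h2.trans h3)
    have hτI' := hI τ' (h1.trans h2) h3
    have ha' := hΦa τ' (h1.trans h2) h3
    have st := (E.step ha hK1 hK hτI.1 h2 hτI'.2 ha' rfl).1
    set y := Φ τ' + (τ' - τ) * (1 - D 0 τ (Φ τ')) with hy
    have hy0 : 0 < y := by
      have : 0 ≤ (τ' - τ) * (1 - D 0 τ (Φ τ')) :=
        mul_nonneg (by linarith) (by linarith [E.le_one hτI (ha.trans_le ha')])
      linarith
    have hgy : g τ ≤ D 1 τ y := E.anti 1 hτI hy0 (hΦ τ τ' h1 h2 h3)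
    have e1 : (τ' - τ) * g τ ^ 2 ≤ (τ' - τ) * D 1 τ y ^ 2 := by
      have := hg0 τ h1 (h2.trans h3)
      have : 0 ≤ τ' - τ := by linarith
      gcongr
    have e2 : 0 ≤ Real.exp (-(Φ τ')) * (r τ' - r τ) :=
      mul_nonneg (Real.exp_pos _).le (sub_nonneg.2 (E.mono hτI hτI' h2))
    linarith
  have hmono : ∀ τ τ', s ≤ τ → τ ≤ τ' → τ' ≤ t → g τ ≤ g τ' := by
    intro τ τ' h1 h2 h3
    have := sum_lemma (φ := fun z => -(g z)) (r := r) (C := 70 * K ^ 3) h2 (by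
      intro z z' k1 k2 k3
      have k4 := hstep z z' (h1.trans k1) k2 (k3.trans h3)
      have : 0 ≤ (z' - z) * g z ^ 2 := mul_nonneg (by linarith) (sq_nonneg _)
      linarith)
    linarith
  refine ⟨hmono s t le_rfl hst le_rfl, ?_⟩
  have hc : 0 < g s := hpos
  have := sum_lemma (φ := fun z => z + (g z)⁻¹) (r := r) (C := 71 * K ^ 3 / g s ^ 2) hst (by
    intro z z' k1 k2 k3
    have hzI := hI z k1 (k2.trans k3)
    have hzI' := hI z' (k1.trans k2) k3
    have k4 := hstep z z' k1 k2 k3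
    have c1 := hmono s z le_rfl k1 (k2.trans k3)
    have c2 := hmono z z' k1 k2 k3
    have c3 := hgK z' (k1.trans k2) k3
    have hd : 0 ≤ r z' - r z := sub_nonneg.2 (E.mono hzI hzI' k2)
    have hh : 0 ≤ z' - z := by linarith
    set h := z' - z
    set δ := r z' - r z
    set q := g z
    set q' := g z'
    set c := g s
    have hq : 0 < q := by linarith
    have hq' : 0 < q' := by linarith
    have main : h * q * q' - (q' - q) ≤ 71 * K ^ 3 * h * (h + δ) := by
      have w0 : 0 ≤ K ^ 3 * h * (h + δ) := by positivity
      have w1 : K ^ 3 * h * h ≤ K ^ 3 * h * (h + δ) := by gcongr; linarith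
      rcases le_total (h * q) 1 with hle | hle
      · have a1 : (1 - h * q) * (h * q ^ 2 - 70 * K ^ 3 * h * (h + δ)) ≤ (1 - h * q) * (q' - q) :=
          mul_le_mul_of_nonneg_left (by linarith) (by linarith)
        have a2 : h * h * q ^ 3 ≤ h * h * K ^ 3 := by gcongr; linarith
        have a3 : 0 ≤ h * q * (70 * K ^ 3 * h * (h + δ)) := by positivity
        nlinarith
      · have a1 : h * q * q' ≤ h * K * K := by gcongr; linarith
        have a2 : h * q ≤ h * K := by gcongr; linarith
        have a3 : 1 ≤ h * K := by linarith
        have a4 : h * K * K * 1 ≤ h * K * K * (h * K) := by gcongr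
        nlinarith
    have e1 : z' + q'⁻¹ - (z + q⁻¹) = (h * q * q' - (q' - q)) / (q * q') := by
      have : z' = z + h := by simp [h]
      rw [this]
      field_simp
      ring
    have e2 : (h * q * q' - (q' - q)) / (q * q') ≤ 71 * K ^ 3 * h * (h + δ) / (q * q') := by
      gcongr
    have e3 : 71 * K ^ 3 * h * (h + δ) / (q * q') ≤ 71 * K ^ 3 * h * (h + δ) / (c ^ 2) := by
      gcongr
      nlinarith
    change z' + q'⁻¹ - (z + q⁻¹) ≤ _
    rw [e1]
    refine e2.trans (e3.trans (le_of_eq ?_))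
    ring)
  change (g t)⁻¹ ≤ (g s)⁻¹ - (t - s)
  linarith

lemma EvoFam.barrier_lin (E : EvoFam T D r) {s t x : ℝ} (hs : 0 ≤ s) (hst : s ≤ t)
    (htT : t ≤ T) (hx : 0 < x) (hpos : 0 < D 1 s (x + (t - s))) :
    D 1 s (x + (t - s)) ≤ D 1 t x := by
  have := (E.barrier hx hs hst htT (fun τ => x + (t - τ)) (fun τ _ h2 => by linarith) (by
    intro τ τ' h1 h2 h3
    have hI : τ ∈ Set.Icc 0 T := ⟨hs.trans h1, h2.trans (h3.trans htT)⟩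
    have := E.nonneg 0 τ hI (x + (t - τ')) (by linarith)
    nlinarith) hpos).1
  simpa using this

lemma EvoFam.barrier_exp (E : EvoFam T D r)
    (htend : ∀ t ∈ Set.Icc 0 T, Tendsto (D 0 t) (𝓝[>] 0) (𝓝 1))
    {s t x L : ℝ} (hs : 0 ≤ s) (hst : s ≤ t) (hL : 0 < L)
    (htT : t ≤ T) (hx : 0 < x) (hpos : 0 < D 1 s (x * Real.exp (L * (t - s))))
    (hb : ∀ τ, s ≤ τ → τ ≤ t → ∀ x, 0 < x → D 1 τ x ≤ L) :
    D 1 s (x * Real.exp (L * (t - s))) ≤ D 1 t x ∧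
    (D 1 t x)⁻¹ ≤ (D 1 s (x * Real.exp (L * (t - s))))⁻¹ - (t - s) := by
  have hU : ∀ τ, s ≤ τ → τ ≤ t → ∀ x, 0 < x → 1 - D 0 τ x ≤ L * x := by
    intro τ h1 h2 x hx
    have hI : τ ∈ Set.Icc 0 T := ⟨hs.trans h1, h2.trans htT⟩
    have hlim := htend τ hI
    have : 1 ≤ D 0 τ x + L * x := by
      refine le_of_tendsto hlim ?_
      filter_upwards [Ioo_mem_nhdsGT hx] with y hy
      obtain ⟨c, hc, he⟩ := E.mvt 0 hI hy.1 hy.2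
      have h3 := hb τ h1 h2 c (hy.1.trans hc.1)
      have h4 : D (0+1) τ c * (x - y) ≤ L * (x - y) :=
        mul_le_mul_of_nonneg_right h3 (by linarith [hy.2])
      have h5 : 0 < L * y := mul_pos hL hy.1
      nlinarith
    linarith
  have := (E.barrier hx hs hst htT (fun τ => x * Real.exp (L * (t - τ))) (fun τ _ h2 => by
      have : 1 ≤ Real.exp (L * (t - τ)) := Real.one_le_exp (mul_nonneg hL.le (by linarith))
      nlinarith) (by
    intro τ τ' h1 h2 h3
    have e0 : 0 < x * Real.exp (L * (t - τ')) := by positivity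
    have e1 := hU τ h1 (h2.trans h3) _ e0
    have e2 := Real.add_one_le_exp (L * (τ' - τ))
    have e3 : Real.exp (L * (t - τ)) = Real.exp (L * (t - τ')) * Real.exp (L * (τ' - τ)) := by
      rw [← Real.exp_add]; congr 1; ring
    have e4 : (τ' - τ) * (1 - D 0 τ (x * Real.exp (L * (t - τ')))) ≤
      (τ' - τ) * (L * (x * Real.exp (L * (t - τ')))) :=
      mul_le_mul_of_nonneg_left e1 (by linarith)
    have e5 := mul_le_mul_of_nonneg_left e2 e0.le
    rw [e3]
    linarith) hpos)
  simpa using this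

lemma R_alg {q p Q S e ε h M c K A ρ : ℝ} (hM : 0 < M) (hc : 0 < c) (hM1 : 1 ≤ 3 * M * c ^ 2)
    (hcq : c ≤ q) (hqK : q ≤ K) (hh : 0 ≤ h) (he : 0 ≤ e) (hε : 0 ≤ ε) (hQ : 0 ≤ Q) (hρ : 0 ≤ ρ)
    (hBA : q + h * q ^ 2 + e ≤ A) (hRy : p - M * q ^ 3 ≤ ρ)
    (s1 : q + h * q ^ 2 + e - ε ≤ Q) (s2 : S ≤ p + 3 * h * q * p + e + ε) :
    S - M * Q ^ 3 ≤ (1 + 3 * K * h) * ρ + (1 + 3 * M * A ^ 2) * ε := by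
  have hq0 : 0 < q := hc.trans_le hcq
  obtain ⟨B, hB⟩ : ∃ B, B = q + h * q ^ 2 + e := ⟨_, rfl⟩
  rw [← hB] at hBA s1
  have hB0 : 0 ≤ B := by rw [hB]; positivity
  have t1 : B ^ 3 - 3 * B ^ 2 * ε ≤ Q ^ 3 := by
    have u1 : 0 ≤ (Q - B) ^ 2 * (Q + 2 * B) := by positivity
    have u2 : 3 * B ^ 2 * (B - ε) ≤ 3 * B ^ 2 * Q :=
      mul_le_mul_of_nonneg_left s1 (by positivity)
    have u3 : Q ^ 3 - B ^ 3 - 3 * B ^ 2 * (Q - B) = (Q - B) ^ 2 * (Q + 2 * B) := by ring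
    linarith
  have t2 : q ^ 3 + 3 * q ^ 2 * (h * q ^ 2 + e) ≤ B ^ 3 := by
    have u1 : 0 ≤ (B - q) ^ 2 * (B + 2 * q) := by positivity
    have u2 : h * q ^ 2 + e = B - q := by rw [hB]; ring
    have u3 : B ^ 3 - q ^ 3 - 3 * q ^ 2 * (B - q) = (B - q) ^ 2 * (B + 2 * q) := by ring
    rw [u2]
    linarith
  have t3 : B ^ 2 * ε ≤ A ^ 2 * ε := by gcongr
  have t4 : 1 * e ≤ 3 * M * q ^ 2 * e := by
    have : 3 * M * c ^ 2 ≤ 3 * M * q ^ 2 := by gcongr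
    exact mul_le_mul_of_nonneg_right (by linarith) he
  have t5 : 3 * h * q * (p - M * q ^ 3) ≤ 3 * h * q * ρ :=
    mul_le_mul_of_nonneg_left hRy (by positivity)
  have t6 : 3 * h * q * ρ ≤ 3 * h * K * ρ := by gcongr
  have t7 : M * (q ^ 3 + 3 * q ^ 2 * (h * q ^ 2 + e) - 3 * (A ^ 2 * ε)) ≤ M * Q ^ 3 :=
    mul_le_mul_of_nonneg_left (by linarith) hM.le
  linarith

set_option maxHeartbeats 1000000 in
lemma EvoFam.R_bound (E : EvoFam T D r) {xbar c M : ℝ} (hc : 0 < c)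
    (hcD : c ≤ D 1 0 (xbar + T)) (hM : 0 < M) (hM1 : 1 ≤ 3 * M * c ^ 2)
    (hM2 : ∀ y, 0 < y → D 2 0 y ≤ M * c ^ 3) {t x : ℝ} (ht : t ∈ Set.Icc 0 T) (hx : 0 < x)
    (hxb : x ≤ xbar) : D 2 t x ≤ M * D 1 t x ^ 3 := by
  have hT0 : 0 ≤ T := ht.1.trans ht.2
  have h0I : (0:ℝ) ∈ Set.Icc 0 T := ⟨le_rfl, hT0⟩
  have hTI : T ∈ Set.Icc 0 T := ⟨hT0, le_rfl⟩
  have hclow : ∀ τ ∈ Set.Icc 0 T, ∀ y, 0 < y → y + τ ≤ xbar + T → c ≤ D 1 τ y := by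
    intro τ hτ y hy hyt
    have h1 : c ≤ D 1 0 (y + (τ - 0)) :=
      hcD.trans (E.anti 1 h0I (by linarith [hτ.1]) (by linarith))
    exact h1.trans (E.barrier_lin le_rfl hτ.1 hτ.2 hy (hc.trans_le h1))
  obtain ⟨K, hK1, hK⟩ := E.exists_bd hx
  set R : ℝ → ℝ → ℝ := fun τ y => max 0 (D 2 τ y - M * D 1 τ y ^ 3) with hR
  set ρ : ℝ → ℝ := fun τ => sSup (R τ '' Set.Icc x (x + (t - τ))) with hρ
  have hbdd : ∀ τ ∈ Set.Icc 0 t, BddAbove (R τ '' Set.Icc x (x + (t - τ))) := by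
    intro τ hτ
    refine ⟨K, ?_⟩
    rintro _ ⟨y, hy, rfl⟩
    have hτI : τ ∈ Set.Icc 0 T := ⟨hτ.1, hτ.2.trans ht.2⟩
    have h1 := hK τ hτI y hy.1 2 (by norm_num)
    have h2 := E.nonneg 1 τ hτI y (hx.trans_le hy.1)
    have h3 : 0 ≤ M * D 1 τ y ^ 3 := by positivity
    exact max_le (by linarith) (by linarith)
  have hle : ∀ τ ∈ Set.Icc 0 t, ∀ y ∈ Set.Icc x (x + (t - τ)), R τ y ≤ ρ τ := fun τ hτ y hy =>
    le_csSup (hbdd τ hτ) ⟨y, hy, rfl⟩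
  have hρ0 : ∀ τ ∈ Set.Icc 0 t, 0 ≤ ρ τ := fun τ hτ =>
    (le_max_left _ _).trans (hle τ hτ x ⟨le_rfl, by linarith [hτ.2]⟩)
  set A := K + T * K ^ 2 + (r T - r 0) with hA
  set C := 70 * K ^ 3 * (1 + 3 * M * A ^ 2) with hC
  have hstep : ∀ τ τ', 0 ≤ τ → τ ≤ τ' → τ' ≤ t →
      ρ τ' ≤ (1 + 3 * K * (τ' - τ)) * ρ τ + C * (τ' - τ) * ((τ' - τ) + (r τ' - r τ)) := by
    intro τ τ' h1 h2 h3
    have hτ : τ ∈ Set.Icc 0 t := ⟨h1, h2.trans h3⟩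
    have hτI : τ ∈ Set.Icc 0 T := ⟨h1, (h2.trans h3).trans ht.2⟩
    have hτI' : τ' ∈ Set.Icc 0 T := ⟨h1.trans h2, h3.trans ht.2⟩
    have hρ0' := hρ0 τ hτ
    have hδ0 : 0 ≤ r τ' - r τ := sub_nonneg.2 (E.mono hτI hτI' h2)
    have hδ1 : r τ' - r τ ≤ r T - r 0 := by
      have := E.mono hτI' hTI hτI'.2
      have := E.mono h0I hτI h1
      linarith
    refine csSup_le ((Set.nonempty_Icc.2 (by linarith)).image _) ?_
    rintro _ ⟨x', hx', rfl⟩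
    have hx'0 : 0 < x' := hx.trans_le hx'.1
    obtain ⟨s1, s2⟩ := E.step hx hK1 hK h1 h2 hτI'.2 hx'.1 rfl
    have hU0 : 0 ≤ 1 - D 0 τ x' := by linarith [E.le_one hτI hx'0]
    have hU1 : 1 - D 0 τ x' ≤ 1 := by linarith [E.nonneg 0 τ hτI x' hx'0]
    have hh : 0 ≤ τ' - τ := by linarith
    have hhT : τ' - τ ≤ T := by linarith [hτI'.2]
    have hyl : x' ≤ x' + (τ' - τ) * (1 - D 0 τ x') := by nlinarith
    have hyu : x' + (τ' - τ) * (1 - D 0 τ x') ≤ x' + (τ' - τ) := by nlinarith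
    set y := x' + (τ' - τ) * (1 - D 0 τ x') with hy
    have hymem : y ∈ Set.Icc x (x + (t - τ)) := ⟨hx'.1.trans hyl, by linarith [hx'.2]⟩
    have hRy : D 2 τ y - M * D 1 τ y ^ 3 ≤ ρ τ := (le_max_right _ _).trans (hle τ hτ y hymem)
    have hcq : c ≤ D 1 τ y := hclow τ hτI y (by linarith) (by linarith [hymem.2, ht.2])
    have hqK : D 1 τ y ≤ K := hK τ hτI y hymem.1 1 (by norm_num)
    have hQ0 : 0 ≤ D 1 τ' x' := E.nonneg 1 τ' hτI' x' hx'0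
    have hex : Real.exp (-x') ≤ 1 := by rw [Real.exp_le_one_iff]; linarith
    have hex0 := Real.exp_pos (-x')
    have he0 : 0 ≤ Real.exp (-x') * (r τ' - r τ) := by positivity
    have he1 : Real.exp (-x') * (r τ' - r τ) ≤ r T - r 0 := by nlinarith
    have hε0 : 0 ≤ 70 * K ^ 3 * (τ' - τ) * ((τ' - τ) + (r τ' - r τ)) := by positivity
    have hCε : C * (τ' - τ) * ((τ' - τ) + (r τ' - r τ)) =
      (1 + 3 * M * A ^ 2) * (70 * K ^ 3 * (τ' - τ) * ((τ' - τ) + (r τ' - r τ))) := by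
      rw [hC]; ring
    rw [hCε]
    have hq0 : 0 < D 1 τ y := hc.trans_le hcq
    have hBA : D 1 τ y + (τ' - τ) * D 1 τ y ^ 2 + Real.exp (-x') * (r τ' - r τ) ≤ A := by
      have : (τ' - τ) * D 1 τ y ^ 2 ≤ T * K ^ 2 := by gcongr
      linarith
    have hK0 : 0 ≤ K := by linarith
    have hfinal := R_alg (S := D 2 τ' x') hM hc hM1 hcq hqK hh he0 hε0 hQ0 hρ0' hBA hRy
      (by linarith) (by linarith)
    refine max_le ?_ hfinal
    have : 0 ≤ 1 + 3 * M * A ^ 2 := by positivity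
    have : 0 ≤ 1 + 3 * K * (τ' - τ) := by positivity
    positivity
  have hCnn : 0 ≤ C := by
    have : 0 ≤ K := by linarith
    rw [hC]; positivity
  have hfin := sum_lemma (φ := fun τ => Real.exp (-(3 * K * τ)) * ρ τ) (r := r) (C := C) ht.1 (by
    intro τ τ' h1 h2 h3
    have hτ : τ ∈ Set.Icc 0 t := ⟨h1, h2.trans h3⟩
    have hτI : τ ∈ Set.Icc 0 T := ⟨h1, (h2.trans h3).trans ht.2⟩
    have hτI' : τ' ∈ Set.Icc 0 T := ⟨h1.trans h2, h3.trans ht.2⟩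
    have hρ0' := hρ0 τ hτ
    have hδ0 : 0 ≤ r τ' - r τ := sub_nonneg.2 (E.mono hτI hτI' h2)
    have hh : 0 ≤ τ' - τ := by linarith
    have hC0 : 0 ≤ C * (τ' - τ) * ((τ' - τ) + (r τ' - r τ)) :=
      mul_nonneg (mul_nonneg hCnn hh) (by linarith)
    have s1 := hstep τ τ' h1 h2 h3
    have x1 := Real.add_one_le_exp (3 * K * (τ' - τ))
    have x2 : Real.exp (-(3 * K * τ)) =
        Real.exp (-(3 * K * τ')) * Real.exp (3 * K * (τ' - τ)) := by
      rw [← Real.exp_add]; congr 1; ring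
    have x3 : Real.exp (-(3 * K * τ')) ≤ 1 := by
      rw [Real.exp_le_one_iff]
      have : 0 ≤ 3 * K * τ' := mul_nonneg (by linarith) hτI'.1
      linarith
    have x4 := Real.exp_pos (-(3 * K * τ'))
    have y1 := mul_le_mul_of_nonneg_left s1 x4.le
    have y2 : Real.exp (-(3 * K * τ')) * ((3 * K * (τ' - τ) + 1) * ρ τ) ≤
        Real.exp (-(3 * K * τ')) * (Real.exp (3 * K * (τ' - τ)) * ρ τ) := by gcongr
    have y3 : Real.exp (-(3 * K * τ')) * (C * (τ' - τ) * ((τ' - τ) + (r τ' - r τ))) ≤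
        1 * (C * (τ' - τ) * ((τ' - τ) + (r τ' - r τ))) := by gcongr
    rw [x2]
    linarith)
  have hz : ρ 0 ≤ 0 := by
    refine csSup_le ((Set.nonempty_Icc.2 (by linarith [ht.1])).image _) ?_
    rintro _ ⟨y, hy, rfl⟩
    have hy0 : 0 < y := hx.trans_le hy.1
    refine max_le le_rfl ?_
    have h1 := hM2 y hy0
    have h2 := hclow 0 h0I y hy0 (by linarith [hy.2, ht.2])
    have h3 : M * c ^ 3 ≤ M * D 1 0 y ^ 3 := by gcongr
    linarith
  have hRt := hle t ⟨ht.1, le_rfl⟩ x ⟨le_rfl, by linarith⟩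
  have hRt' := (le_max_right _ _).trans hRt
  simp only [mul_zero, neg_zero, Real.exp_zero, one_mul] at hfin
  have hx4 := Real.exp_pos (-(3 * K * t))
  have : ρ t ≤ 0 := by
    by_contra hcon
    push Not at hcon
    have := mul_pos hx4 hcon
    linarith
  linarith

lemma RegFam.P_bound (h : RegFam T D) (hpos : ∀ t ∈ Set.Icc 0 T, ∀ x, 0 < x → 0 < D 1 t x)
    {xbar M : ℝ}
    (hR : ∀ t ∈ Set.Icc 0 T, ∀ x, 0 < x → x ≤ xbar → D 2 t x ≤ M * D 1 t x ^ 3)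
    {t x y : ℝ} (ht : t ∈ Set.Icc 0 T) (hy : 0 < y) (hyx : y < x) (hx : x ≤ xbar) :
    (D 1 t x ^ 2)⁻¹ ≤ (D 1 t y ^ 2)⁻¹ + 2 * M * (x - y) := by
  have hd : ∀ z, 0 < z → HasDerivAt (fun z => (D 1 t z ^ 2)⁻¹) (2 * D 2 t z / D 1 t z ^ 3) z := by
    intro z hz
    have hp := hpos t ht z hz
    refine (((h.der 1 t ht z hz).pow 2).inv (pow_ne_zero 2 hp.ne.symm)).congr_deriv ?_
    simp only [Pi.pow_apply]
    norm_num
    field_simp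
  obtain ⟨c, hc, he⟩ := exists_hasDerivAt_eq_slope _ _ hyx
    (fun z hz => (hd z (hy.trans_le hz.1)).continuousAt.continuousWithinAt)
    (fun z hz => hd z (hy.trans hz.1))
  have hc0 := hy.trans hc.1
  have h1 := hR t ht c hc0 (hc.2.le.trans hx)
  have hp := hpos t ht c hc0
  have h2 : 2 * D 2 t c / D 1 t c ^ 3 ≤ 2 * M := by
    rw [div_le_iff₀ (by positivity)]
    linarith
  rw [he, div_le_iff₀ (by linarith)] at h2
  linarith

lemma EvoFam.blow (E : EvoFam T D r) (hpos : ∀ t ∈ Set.Icc 0 T, ∀ x, 0 < x → 0 < D 1 t x)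
    (htend : ∀ t ∈ Set.Icc 0 T, Tendsto (D 0 t) (𝓝[>] 0) (𝓝 1)) {xbar M : ℝ} (hxb : 0 < xbar)
    (hM : 0 < M)
    (hR : ∀ t ∈ Set.Icc 0 T, ∀ x, 0 < x → x ≤ xbar → D 2 t x ≤ M * D 1 t x ^ 3)
    {m1 m2 : ℝ} (hm1 : 0 < m1) (hm2 : 0 ≤ m2) (hlow : ∀ x, 0 < x → m1 - x * m2 ≤ D 1 0 x)
    {t L : ℝ} (ht : t ∈ Set.Icc 0 T) (htm : m1⁻¹ ≤ t) (hL : 0 < L)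
    (hb : ∀ x, 0 < x → D 1 t x ≤ L) : False := by
  set d := min (xbar / 2) (3 / (16 * M * L ^ 2)) with hd
  have hd0 : 0 < d := lt_min (by positivity) (by positivity)
  have hd1 : 2 * d ≤ xbar := by linarith [min_le_left (xbar / 2) (3 / (16 * M * L ^ 2))]
  have hd2 : d * (16 * M * L ^ 2) ≤ 3 := by
    rw [← le_div_iff₀ (by positivity)]
    exact min_le_right _ _
  have key : ∀ s s', 0 ≤ s → s ≤ s' → s' ≤ T → s' - s ≤ d → (∀ x, 0 < x → D 1 s' x ≤ L) →
      ∀ x, 0 < x → D 1 s x ≤ 2 * L := by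
    intro s s' h0 h1 h2 h3 h4
    have hsI : s ∈ Set.Icc 0 T := ⟨h0, h1.trans h2⟩
    have hL2 : D 1 s (2 * d) ≤ L := by
      have e : 2 * d = (2 * d - (s' - s)) + (s' - s) := by ring
      rw [e]
      have hx0 : 0 < 2 * d - (s' - s) := by linarith
      exact (E.barrier_lin h0 h1 h2 hx0 (hpos s hsI _ (by linarith))).trans (h4 _ hx0)
    intro x hx
    rcases lt_or_ge x (2 * d) with hlt | hge
    · have hp := E.P_bound hpos hR hsI hx hlt hd1
      have p1 := hpos s hsI x hx
      have p2 := hpos s hsI (2 * d) (by linarith)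
      have e1 : (L ^ 2)⁻¹ ≤ (D 1 s (2 * d) ^ 2)⁻¹ := by gcongr
      have e2 : 2 * M * (2 * d - x) ≤ 4 * M * d := by nlinarith
      have e3 : 4 * M * d ≤ 3 / 4 * (L ^ 2)⁻¹ := by
        rw [← div_eq_mul_inv, le_div_iff₀ (by positivity)]
        linarith
      have e4 : ((2 * L) ^ 2)⁻¹ ≤ (D 1 s x ^ 2)⁻¹ := by
        have : ((2 * L) ^ 2)⁻¹ = 1 / 4 * (L ^ 2)⁻¹ := by
          rw [mul_pow, mul_inv]; norm_num
        linarith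
      rw [inv_le_inv₀ (by positivity) (by positivity)] at e4
      exact (sq_le_sq₀ p1.le (by positivity)).1 e4
    · linarith [E.anti 1 hsI (by linarith : 0 < 2 * d) hge]
  have H : ∀ n : ℕ, ∀ s, 0 ≤ s → s ≤ t → t - s ≤ n * d → ∀ x, 0 < x → D 1 s x ≤ L := by
    intro n
    induction n with
    | zero =>
      intro s h0 h1 h2
      have : s = t := by
        simp at h2
        linarith
      rw [this]
      exact hb
    | succ n ih =>
      intro s h0 h1 h2 x hx
      push_cast at h2
      set s' := min t (s + d) with hs'
      have g1 : s ≤ s' := le_min h1 (by linarith)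
      have g2 : s' ≤ t := min_le_left _ _
      have g3 : s' ≤ s + d := min_le_right _ _
      have g4 : t - s' ≤ n * d := by
        have : 0 ≤ (n:ℝ) * d := by positivity
        rcases min_choice t (s + d) with hc | hc <;> rw [← hs'] at hc <;> rw [hc] <;> linarith
      have hLs' := ih s' (h0.trans g1) g2 g4
      have hsI : s ∈ Set.Icc 0 T := ⟨h0, h1.trans ht.2⟩
      set x' := x * Real.exp (-(2 * L * (s' - s))) with hx'
      have hx'0 : 0 < x' := by positivity
      have hxx : x' * Real.exp (2 * L * (s' - s)) = x := by
        rw [hx', mul_assoc, ← Real.exp_add]; simp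
      have := (E.barrier_exp htend (L := 2 * L) h0 g1 (by positivity) (g2.trans ht.2) hx'0
        (hpos s hsI _ (by positivity)) (by
          intro τ k1 k2
          exact key τ s' (h0.trans k1) k2 (g2.trans ht.2) (by linarith) hLs')).1
      rw [hxx] at this
      exact this.trans (hLs' _ hx'0)
  have H' : ∀ s, 0 ≤ s → s ≤ t → ∀ x, 0 < x → D 1 s x ≤ L := by
    intro s h0 h1
    obtain ⟨n, hn⟩ := exists_nat_ge ((t - s) / d)
    exact H n s h0 h1 (by rwa [div_le_iff₀ hd0] at hn)
  have h0I : (0:ℝ) ∈ Set.Icc 0 T := ⟨le_rfl, ht.1.trans ht.2⟩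
  have F1 : ∀ z, 0 < z → D 1 0 z ≤ (L⁻¹ + t)⁻¹ := by
    intro z hz
    set x' := z * Real.exp (-(L * (t - 0))) with hx'
    have hx'0 : 0 < x' := by positivity
    have hxx : x' * Real.exp (L * (t - 0)) = z := by
      rw [hx', mul_assoc, ← Real.exp_add]; simp
    have := (E.barrier_exp htend le_rfl ht.1 hL ht.2 hx'0 (hpos 0 h0I _ (by positivity)) H').2
    rw [hxx, sub_zero] at this
    have p1 := hpos t ht x' hx'0
    have p2 := hpos 0 h0I z hz
    have e1 : L⁻¹ ≤ (D 1 t x')⁻¹ := by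
      gcongr
      exact hb x' hx'0
    have hLi : 0 < L⁻¹ := by positivity
    rw [le_inv_comm₀ p2 (by linarith [ht.1])]
    linarith
  have F2 : m1 ≤ (L⁻¹ + t)⁻¹ := by
    refine le_of_forall_pos_le_add fun ε hε => ?_
    have hz : 0 < ε / (m2 + 1) := by positivity
    have h1 := F1 _ hz
    have h2 := hlow _ hz
    have h3 : ε / (m2 + 1) * m2 ≤ ε := by
      rw [div_mul_eq_mul_div, div_le_iff₀ (by positivity)]
      nlinarith
    linarith
  have hLi : 0 < L⁻¹ := by positivity
  rw [le_inv_comm₀ hm1 (by linarith [ht.1])] at F2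
  linarith

end

lemma gD_evoFam {T : ℝ} (hT : 0 < T) {v : ℕ → ℝ → ℝ} {r : ℝ → ℝ} (hsol : IsBurgersSolution T v r)
    (hcons : ∀ t ∈ Set.Icc (0:ℝ) T, HasSum (fun k : ℕ => v (k + 1) t) 1) :
    EvoFam T (gD v) r := by
  obtain ⟨hv, -, -, hr, -, -, -, heqn⟩ := hsol
  have hw : ∀ t ∈ Set.Icc (0:ℝ) T, ∀ k : ℕ, 0 ≤ v (k + 1) t := fun t ht k =>
    hv (k + 1) (by omega) t ht
  have h0I : (0:ℝ) ∈ Set.Icc 0 T := ⟨le_rfl, hT.le⟩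
  have hreg : RegFam T (gD v) :=
    { nonneg := fun n t ht x _ => gw_nonneg (hw t ht) (hcons t ht) n x
      le := fun n t ht x hx => gw_le (hw t ht) (hcons t ht) n hx
      der := fun n t ht x hx => gw_hasDerivAt (hw t ht) (hcons t ht) n hx }
  refine evoFam_of hT hreg hr ?_ ?_
  · intro t ht x hx
    rw [← heqn t ht x hx]
    have : ∫ s in (0:ℝ)..t, genFun v s x * deriv (genFun v s) x =
        ∫ s in (0:ℝ)..t, -(gF (gD v) 0 s x) := by
      refine intervalIntegral.integral_congr fun s hs => ?_
      rw [Set.uIcc_of_le ht.1] at hs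
      have hsI : s ∈ Set.Icc 0 T := ⟨hs.1, hs.2.trans ht.2⟩
      have hd := ((hreg.der 0 s hsI x hx).sub_const 1).deriv
      simp only [genFun_eq, gF]
      rw [hd]
      ring
    rw [this, intervalIntegral.integral_neg]
    simp only [genFun_eq]
    ring
  · intro t ht y hy h
    exact gw_eq_of_local (hw t ht) (hcons t ht) (hw 0 h0I) (hcons 0 h0I) hy h

/-- for a conservative solution with `∑ k² v_k(0) < ∞` and
`T ≥ T_gel`, beyond the gelation time `−∂ₓV(t,x) ≥ C·x^(−1/2)` near `x = 0`;
in particular `∂ₓV(t, 0⁺) = −∞`. -/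
theorem deriv_genFun_blowup (T : ℝ) (hT : 0 < T) (v : ℕ → ℝ → ℝ) (r : ℝ → ℝ) (Tgel : ℝ)
    (hsol : IsBurgersSolution T v r)
    (hcons : ∀ t ∈ Set.Icc (0:ℝ) T, HasSum (fun k : ℕ => v (k + 1) t) 1)
    (hm2 : Summable (fun k : ℕ => ((k : ℝ) + 1) ^ 2 * v (k + 1) 0))
    (hTgel : Tgel = (∑' k : ℕ, ((k : ℝ) + 1) * v (k + 1) 0)⁻¹)
    (hTgelT : Tgel ≤ T) :
    (∀ tbar ∈ Set.Icc Tgel T, ∀ xbar : ℝ, 0 < xbar →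
      ∃ C : ℝ, 0 < C ∧ ∀ t ∈ Set.Icc Tgel tbar, ∀ x ∈ Set.Ioc (0:ℝ) xbar,
        C * x ^ (-(1:ℝ)/2) ≤ -deriv (genFun v t) x) ∧
    (∀ t ∈ Set.Icc Tgel T,
      Tendsto (fun x => deriv (genFun v t) x) (𝓝[>] (0:ℝ)) atBot) := by
  have E := gD_evoFam hT hsol hcons
  have hw : ∀ t ∈ Set.Icc (0:ℝ) T, ∀ k : ℕ, 0 ≤ v (k + 1) t := fun t ht k =>
    hsol.1 (k + 1) (by omega) t ht
  have h0I : (0:ℝ) ∈ Set.Icc 0 T := ⟨le_rfl, hT.le⟩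
  have hpos : ∀ t ∈ Set.Icc 0 T, ∀ x, 0 < x → 0 < gD v 1 t x := fun t ht x hx =>
    gw_one_pos (hw t ht) (hcons t ht) hx
  have htend : ∀ t ∈ Set.Icc 0 T, Tendsto (gD v 0 t) (𝓝[>] 0) (𝓝 1) := fun t ht =>
    gw_zero_tendsto (hw t ht) (hcons t ht)
  have hder : ∀ t ∈ Set.Icc 0 T, ∀ x, 0 < x → deriv (genFun v t) x = -(gD v 1 t x) := by
    intro t ht x hx
    rw [genFun_eq]
    exact ((E.der 0 t ht x hx).sub_const 1).deriv
  have hm1s : Summable (fun k : ℕ => ((k : ℝ) + 1) * v (k + 1) 0) := by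
    refine Summable.of_nonneg_of_le (fun k => ?_) (fun k => ?_) hm2
    · have := hw 0 h0I k
      positivity
    · have := hw 0 h0I k
      have hk : (0:ℝ) ≤ k := k.cast_nonneg
      gcongr
      nlinarith
  set m1 := ∑' k : ℕ, ((k : ℝ) + 1) * v (k + 1) 0 with hm1d
  set m2 := ∑' k : ℕ, ((k : ℝ) + 1) ^ 2 * v (k + 1) 0 with hm2d
  have hm1 : 0 < m1 := by
    have : (∑' k : ℕ, v (k + 1) 0) ≤ m1 := by
      refine (hcons 0 h0I).summable.tsum_le_tsum (fun k => ?_) hm1s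
      have := hw 0 h0I k
      have hk : (0:ℝ) ≤ k := k.cast_nonneg
      nlinarith
    rw [(hcons 0 h0I).tsum_eq] at this
    linarith
  have hm20 : 0 ≤ m2 := tsum_nonneg fun k => by
    have := hw 0 h0I k
    positivity
  have hlow : ∀ x, 0 < x → m1 - x * m2 ≤ gD v 1 0 x := fun x hx =>
    gw_one_lower (hw 0 h0I) (hcons 0 h0I) hm2 hx
  have hTg : 0 < Tgel := by rw [hTgel]; positivity
  have hex : ∀ xbar : ℝ, 0 < xbar → ∃ M : ℝ, 0 < M ∧
      ∀ t ∈ Set.Icc 0 T, ∀ x, 0 < x → x ≤ xbar → gD v 2 t x ≤ M * gD v 1 t x ^ 3 := by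
    intro xbar hxb
    have hc : 0 < gD v 1 0 (xbar + T) := hpos 0 h0I _ (by linarith)
    set c := gD v 1 0 (xbar + T) with hcd
    have hM : 0 < m2 / c ^ 3 + 1 / (3 * c ^ 2) := by positivity
    refine ⟨m2 / c ^ 3 + 1 / (3 * c ^ 2), hM, ?_⟩
    intro t ht x hx hxx
    refine E.R_bound hc hcd.le hM ?_ ?_ ht hx hxx
    · have e : 3 * (m2 / c ^ 3 + 1 / (3 * c ^ 2)) * c ^ 2 = 1 + 3 * m2 / c := by
        field_simp
        ring
      rw [e]
      have : 0 ≤ 3 * m2 / c := by positivity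
      linarith
    · intro y hy
      have e : (m2 / c ^ 3 + 1 / (3 * c ^ 2)) * c ^ 3 = m2 + c / 3 := by
        field_simp
      rw [e]
      have h1 : gD v 2 0 y ≤ m2 := gw_two_le (hw 0 h0I) (hcons 0 h0I) hm2 hy
      linarith
  have hunb : ∀ t ∈ Set.Icc Tgel T, ∀ L : ℝ, 0 < L → ∃ y, 0 < y ∧ L < gD v 1 t y := by
    intro t ht L hL
    obtain ⟨M, hM, hR⟩ := hex 1 one_pos
    by_contra! hcon
    exact E.blow hpos htend one_pos hM hR hm1 hm20 hlow ⟨hTg.le.trans ht.1, ht.2⟩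
      (hTgel ▸ ht.1) hL hcon
  constructor
  · intro tbar htbar xbar hxb
    obtain ⟨M, hM, hR⟩ := hex xbar hxb
    refine ⟨(√(2 * M))⁻¹, by positivity, ?_⟩
    intro t ht x hx
    have htI' : t ∈ Set.Icc Tgel T := ⟨ht.1, ht.2.trans htbar.2⟩
    have htI : t ∈ Set.Icc 0 T := ⟨hTg.le.trans ht.1, htI'.2⟩
    have hx0 : 0 < x := hx.1
    rw [hder t htI x hx0, neg_neg]
    have hp := hpos t htI x hx0
    have key : (gD v 1 t x ^ 2)⁻¹ ≤ 2 * M * x := by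
      refine le_of_forall_pos_le_add fun ε hε => ?_
      obtain ⟨y, hy, hLy⟩ := hunb t htI' (gD v 1 t x + (√ε)⁻¹) (by positivity)
      have hse : 0 < √ε := Real.sqrt_pos.2 hε
      have hsi : 0 < (√ε)⁻¹ := by positivity
      have hyx : y < x := by
        by_contra! hcon
        have := E.anti 1 htI hx0 hcon
        linarith
      have hP := E.P_bound hpos hR htI hy hyx hx.2
      have h1 : (gD v 1 t y ^ 2)⁻¹ ≤ (((√ε)⁻¹) ^ 2)⁻¹ := by
        gcongr
        linarith
      have h2 : (((√ε)⁻¹) ^ 2)⁻¹ = ε := by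
        rw [inv_pow, inv_inv, Real.sq_sqrt hε.le]
      have h3 : 0 < 2 * M * y := by positivity
      linarith
    have hxp : x ^ (-(1:ℝ)/2) = (√x)⁻¹ := by
      rw [neg_div, Real.rpow_neg hx0.le, Real.sqrt_eq_rpow]
    rw [hxp, ← mul_inv, ← Real.sqrt_mul (by positivity)]
    rw [inv_le_comm₀ (by positivity) hp]
    refine Real.le_sqrt_of_sq_le ?_
    rwa [inv_pow]
  · intro t ht
    have htI : t ∈ Set.Icc 0 T := ⟨hTg.le.trans ht.1, ht.2⟩
    rw [tendsto_atBot]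
    intro b
    obtain ⟨y, hy, hLy⟩ := hunb t ht (|b| + 1) (by positivity)
    filter_upwards [Ioo_mem_nhdsGT hy] with x hx
    rw [hder t htI x hx.1]
    have h1 := E.anti 1 htI hx.1 hx.2.le
    have h2 := neg_abs_le b
    linarith
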